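/- Let P be a finite set of points and Γ a finite set of irreducible plane curves such that every curve in Γ has degree at most d, any two distinct curves of Γ intersect in at most M points, and any two distinct points of P lie on at most M common curves of Γ. Then the number of incidences I(P, Γ) satisfies I(P, Γ) ≤ C(d, M)·(|P|^{2/3}|Γ|^{2/3} + |P| + |Γ|). -/

import Mathlib

namespace IncB

/-- Combinatorial data of an `x`-monotone graph: `τ v` is the (discrete) abscissa of the vertex `v`,
`h v` its height, `l e` and `r e` the left and right endpoints of the edge `e`. -/
structure Sys (V E : Type) where
  τ : V → ℕ
  h : V → ℝ
  l : E → V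
  r : E → V
  hlr : ∀ e, τ (l e) < τ (r e)
  hinj : ∀ u v, τ u = τ v → h u = h v → u = v

variable {V E : Type}

/-- The edge `e` is present in the gap between the critical times `i` and `i + 1`. -/
def Sys.act (S : Sys V E) (e : E) (i : ℕ) : Prop := S.τ (S.l e) ≤ i ∧ i < S.τ (S.r e)

/-- A drawing: heights `a e i` at critical times and `b e i` in the gaps. -/
structure Sys.Dr (S : Sys V E) (a b : E → ℕ → ℝ) : Prop where
  left : ∀ e, a e (S.τ (S.l e)) = S.h (S.l e)
  right : ∀ e, a e (S.τ (S.r e)) = S.h (S.r e)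
  dist : ∀ e f i, e ≠ f → S.act e i → S.act f i → b e i ≠ b f i
  cr : ∀ e f i, S.act e i → S.act f i → a e i < a f i → b e i < b f i
  cl : ∀ e f i, S.act e i → S.act f i → a e (i+1) < a f (i+1) → b e i < b f i
  vert : ∀ v e, S.τ (S.l e) < S.τ v → S.τ v < S.τ (S.r e) → a e (S.τ v) ≠ S.h v

/-- The edges `e` and `f` cross at the critical time `i + 1`. -/
def Sys.Cr (S : Sys V E) (b : E → ℕ → ℝ) (e f : E) (i : ℕ) : Prop :=
  S.act e i ∧ S.act f i ∧ S.act e (i+1) ∧ S.act f (i+1) ∧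
    ¬ (b e i < b f i ↔ b e (i+1) < b f (i+1))

lemma Sys.persist (S : Sys V E) {b : E → ℕ → ℝ} {e f : E} (hn : ∀ i, ¬ S.Cr b e f i)
    {i j : ℕ} (hij : i ≤ j) (h1 : S.act e i) (h2 : S.act f i) (h3 : S.act e j) (h4 : S.act f j) :
    b e i < b f i ↔ b e j < b f j := by
  induction j, hij using Nat.le_induction with
  | base => rfl
  | succ k hk ih =>
    have h5 : S.act e k := ⟨h1.1.trans hk, by have := h3.2; omega⟩
    have h6 : S.act f k := ⟨h2.1.trans hk, by have := h4.2; omega⟩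
    rw [ih h5 h6]
    by_contra hc
    exact hn k ⟨h5, h6, h3, h4, hc⟩

/-- Candidates for the vertex seen first in the wedge `(e, f)`. -/
def Sys.Cand (S : Sys V E) (a : E → ℕ → ℝ) (e f : E) (u : V) : Prop :=
  S.τ (S.l e) < S.τ u ∧ S.τ u ≤ S.τ (S.r e) ∧ S.τ u ≤ S.τ (S.r f) ∧
    a e (S.τ u) ≤ S.h u ∧ S.h u ≤ a f (S.τ u)

/-- `f` is the edge directly above `e` among those of `F` with the same left endpoint. -/
def Sys.Suc (S : Sys V E) (b : E → ℕ → ℝ) (F : Finset E) (e f : E) : Prop :=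
  f ∈ F ∧ S.l f = S.l e ∧ b e (S.τ (S.l e)) < b f (S.τ (S.l e)) ∧
    ∀ g ∈ F, S.l g = S.l e → ¬ (b e (S.τ (S.l e)) < b g (S.τ (S.l e)) ∧
      b g (S.τ (S.l e)) < b f (S.τ (S.l e)))

lemma Sys.no_between (S : Sys V E) {a b : E → ℕ → ℝ} (D : S.Dr a b) (F : Finset E) (W : Finset V)
    (hW : ∀ e ∈ F, S.l e ∈ W ∧ S.r e ∈ W)
    (hn : ∀ e ∈ F, ∀ f ∈ F, ∀ i, ¬ S.Cr b e f i)
    {e f : E} (he : e ∈ F) (hs : S.Suc b F e f) {u : V} (hu : S.Cand a e f u)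
    (hmin : ∀ w ∈ W, S.Cand a e f w → S.τ u ≤ S.τ w)
    {g : E} (hg : g ∈ F) (i : ℕ) (hi : S.τ u = i + 1) (hga : S.act g i)
    (h1 : b e i < b g i) (h2 : b g i < b f i) : False := by
  obtain ⟨hf, hlf, hef, hbet⟩ := hs
  obtain ⟨u1, u2, u3, u4, u5⟩ := hu
  have hlre := S.hlr e
  have hlrf := S.hlr f
  have hlrg := S.hlr g
  have hea : S.act e i := ⟨by omega, by omega⟩
  have hfa : S.act f i := ⟨by rw [hlf]; omega, by omega⟩
  have hga1 := hga.1
  have hga2 := hga.2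
  rcases lt_or_ge (S.τ (S.l e)) (S.τ (S.l g)) with hc | hc
  · -- the left endpoint of g is an earlier candidate
    have e0 : S.act e (S.τ (S.l g)) := ⟨hc.le, by omega⟩
    have f0 : S.act f (S.τ (S.l g)) := ⟨by rw [hlf]; exact hc.le, by omega⟩
    have g0 : S.act g (S.τ (S.l g)) := ⟨le_rfl, by omega⟩
    have h1' := (S.persist (hn e he g hg) hga1 e0 g0 hea hga).2 h1
    have h2' := (S.persist (hn g hg f hf) hga1 g0 f0 hga hfa).2 h2
    have := hmin (S.l g) (hW g hg).1 ⟨hc, by omega, by omega, by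
      rw [← D.left g]
      by_contra hx
      exact absurd (D.cr _ _ _ g0 e0 (not_le.1 hx)) (not_lt.2 h1'.le), by
      rw [← D.left g]
      by_contra hx
      exact absurd (D.cr _ _ _ f0 g0 (not_le.1 hx)) (not_lt.2 h2'.le)⟩
    omega
  · have e0 : S.act e (S.τ (S.l e)) := ⟨le_rfl, by omega⟩
    have f0 : S.act f (S.τ (S.l e)) := ⟨by rw [hlf], by omega⟩
    have g0 : S.act g (S.τ (S.l e)) := ⟨hc, by omega⟩
    have h1' := (S.persist (hn e he g hg) hea.1 e0 g0 hea hga).2 h1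
    have h2' := (S.persist (hn g hg f hf) hea.1 g0 f0 hga hfa).2 h2
    have ha1 : a e (S.τ (S.l e)) = S.h (S.l e) := D.left e
    have ha2 : a f (S.τ (S.l e)) = S.h (S.l e) := by rw [← hlf]; exact D.left f
    have hag : a g (S.τ (S.l e)) = S.h (S.l e) := by
      apply le_antisymm
      · by_contra hx
        rw [← ha2] at hx
        exact absurd (D.cr _ _ _ f0 g0 (not_le.1 hx)) (not_lt.2 h2'.le)
      · by_contra hx
        rw [← ha1] at hx
        exact absurd (D.cr _ _ _ g0 e0 (not_le.1 hx)) (not_lt.2 h1'.le)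
    rcases hc.lt_or_eq with hc | hc
    · exact D.vert (S.l e) g hc (by omega) hag
    · have : S.l g = S.l e := by
        apply S.hinj _ _ hc
        rw [← D.left g, hc, hag]
      exact hbet g hg this ⟨h1', h2'⟩

theorem Sys.planar [DecidableEq V] [DecidableEq E] (S : Sys V E) {a b : E → ℕ → ℝ} (D : S.Dr a b)
    (F : Finset E) (W : Finset V)
    (hW : ∀ e ∈ F, S.l e ∈ W ∧ S.r e ∈ W)
    (hn : ∀ e ∈ F, ∀ f ∈ F, ∀ i, ¬ S.Cr b e f i)
    (hsimple : ∀ e ∈ F, ∀ f ∈ F, S.l e = S.l f → S.r e = S.r f → e = f) :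
    F.card ≤ 3 * W.card := by
  classical
  have act0 : ∀ e, S.act e (S.τ (S.l e)) := fun e => ⟨le_rfl, S.hlr e⟩
  let T := F.filter (fun e => ∃ f, S.Suc b F e f)
  let U := F.filter (fun e => ¬ ∃ f, S.Suc b F e f)
  have hTU : T.card + U.card = F.card := Finset.card_filter_add_card_filter_not _
  have hU : U.card ≤ W.card := by
    apply Finset.card_le_card_of_injOn S.l
    · intro e he
      exact (hW e (Finset.mem_filter.1 he).1).1
    · -- injectivity on tops
      have key : ∀ e ∈ U, ∀ f ∈ U, S.l e = S.l f →
          ¬ b e (S.τ (S.l e)) < b f (S.τ (S.l e)) := by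
        intro e he f hf hl hlt
        apply (Finset.mem_filter.1 he).2
        have hne : (F.filter (fun g => S.l g = S.l e ∧
            b e (S.τ (S.l e)) < b g (S.τ (S.l e)))).Nonempty :=
          ⟨f, Finset.mem_filter.2 ⟨(Finset.mem_filter.1 hf).1, hl.symm, hlt⟩⟩
        obtain ⟨g, hg, hgm⟩ := Finset.exists_min_image _ (fun g => b g (S.τ (S.l e))) hne
        rw [Finset.mem_filter] at hg
        refine ⟨g, hg.1, hg.2.1, hg.2.2, ?_⟩
        rintro k hk hkl ⟨k1, k2⟩
        exact absurd (hgm k (Finset.mem_filter.2 ⟨hk, hkl, k1⟩)) (not_le.2 k2)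
      intro e he f hf hl
      by_contra hne
      rcases lt_or_gt_of_ne (D.dist e f (S.τ (S.l e)) hne (act0 e)
        (by rw [hl]; exact act0 f)) with h | h
      · exact key e he f hf hl h
      · exact key f hf e he hl.symm (by rw [← hl]; exact h)
  have hT : T.card ≤ 2 * W.card := by
    have hex : ∀ e ∈ T, ∃ f u, S.Suc b F e f ∧ u ∈ W ∧ S.Cand a e f u ∧
        ∀ w ∈ W, S.Cand a e f w → S.τ u ≤ S.τ w := by
      intro e he
      obtain ⟨heF, f, hs⟩ := Finset.mem_filter.1 he
      have hne : (W.filter (fun u => S.Cand a e f u)).Nonempty := by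
        obtain ⟨hf, hlf, hef, hbet⟩ := hs
        have hlre := S.hlr e
        have hlrf := S.hlr f
        have hord : ∀ i, S.act e i → S.act f i → a e (i+1) ≤ a f (i+1) := by
          intro i h1 h2
          by_contra hx
          have h3 := D.cl _ _ _ h2 h1 (not_le.1 hx)
          have h4 := (S.persist (hn e heF f hf) h1.1 (act0 e) (by rw [← hlf]; exact act0 f)
            h1 h2).1 hef
          exact absurd h3 (not_lt.2 h4.le)
        rw [hlf] at hlrf
        rcases le_total (S.τ (S.r e)) (S.τ (S.r f)) with hc | hc
        · refine ⟨S.r e, Finset.mem_filter.2 ⟨(hW e heF).2, by omega, le_rfl, hc, ?_, ?_⟩⟩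
          · rw [D.right]
          · rw [← D.right]
            obtain ⟨i, hi⟩ : ∃ i, S.τ (S.r e) = i + 1 := ⟨S.τ (S.r e) - 1, by omega⟩
            rw [hi]
            exact hord i ⟨by omega, by omega⟩ ⟨by rw [hlf]; omega, by omega⟩
        · refine ⟨S.r f, Finset.mem_filter.2 ⟨(hW f hf).2, by omega, hc, le_rfl, ?_, ?_⟩⟩
          · rw [← D.right]
            obtain ⟨i, hi⟩ : ∃ i, S.τ (S.r f) = i + 1 := ⟨S.τ (S.r f) - 1, by omega⟩
            rw [hi]
            exact hord i ⟨by omega, by omega⟩ ⟨by rw [hlf]; omega, by omega⟩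
          · rw [D.right]
      obtain ⟨u, hu, hmin⟩ := Finset.exists_min_image _ S.τ hne
      rw [Finset.mem_filter] at hu
      exact ⟨f, u, hs, hu.1, hu.2, fun w hw hc => hmin w (Finset.mem_filter.2 ⟨hw, hc⟩)⟩
    have hex' : ∀ e, ∃ f u, e ∈ T → (S.Suc b F e f ∧ u ∈ W ∧ S.Cand a e f u ∧
        ∀ w ∈ W, S.Cand a e f w → S.τ u ≤ S.τ w) := by
      intro e
      by_cases he : e ∈ T
      · obtain ⟨f, u, h⟩ := hex e he
        exact ⟨f, u, fun _ => h⟩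
      · exact ⟨e, S.l e, fun h => absurd h he⟩
    choose s u hall using hex'
    have hsuc := fun e he => (hall e he).1
    have huW := fun e he => (hall e he).2.1
    have hcand := fun e he => (hall e he).2.2.1
    have hmin := fun e he => (hall e he).2.2.2
    have hcard : (W ×ˢ (Finset.univ : Finset Bool)).card = 2 * W.card := by
      rw [Finset.card_product]; simp [mul_comm]
    rw [← hcard]
    have TF : ∀ e ∈ T, e ∈ F := fun e he => (Finset.mem_filter.1 he).1
    have succ_inj : ∀ e ∈ T, ∀ e' ∈ T, s e = s e' → e = e' := by
      intro e he e' he' hss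
      obtain ⟨hf, hlf, hef, hbet⟩ := hsuc e he
      obtain ⟨hf', hlf', hef', hbet'⟩ := hsuc e' he'
      rw [← hss] at hlf' hef' hbet'
      have hll : S.l e = S.l e' := hlf.symm.trans hlf'
      by_contra hne
      rw [← hll] at hef' hbet'
      rcases lt_or_gt_of_ne (D.dist e e' (S.τ (S.l e)) hne (act0 e)
        (by rw [hll]; exact act0 e')) with h | h
      · exact hbet e' (TF e' he') hll.symm ⟨h, hef'⟩
      · exact hbet' e (TF e he) rfl ⟨h, hef⟩
    -- activity just before the candidate
    have acts : ∀ e ∈ T, ∃ i, S.τ (u e) = i + 1 ∧ S.act e i ∧ S.act (s e) i := by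
      intro e he
      obtain ⟨u1, u2, u3, u4, u5⟩ := hcand e he
      have := (hsuc e he).2.1
      exact ⟨S.τ (u e) - 1, by omega, ⟨by omega, by omega⟩, ⟨by rw [this]; omega, by omega⟩⟩
    apply Finset.card_le_card_of_injOn
      (fun e => (u e, decide (S.h (u e) < a (s e) (S.τ (u e)))))
    · intro e he
      exact Finset.mem_coe.2 (Finset.mem_product.2 ⟨huW e he, Finset.mem_univ _⟩)
    · have up : ∀ e ∈ T, ∀ e' ∈ T, u e = u e' → S.h (u e) < a (s e) (S.τ (u e)) →
          S.h (u e') < a (s e') (S.τ (u e')) → ∀ i, S.τ (u e) = i + 1 →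
          ¬ b (s e) i < b (s e') i := by
        intro e he e' he' huu h1 h2 i hi hlt
        obtain ⟨j, hj, ae, ase⟩ := acts e he
        obtain ⟨j', hj', ae', ase'⟩ := acts e' he'
        obtain rfl : j = i := by omega
        obtain rfl : j' = j := by rw [huu] at hj; omega
        refine S.no_between D F W hW hn (TF e' he') (hsuc e' he') (hcand e' he') (hmin e' he')
          (hsuc e he).1 j' hj' ase ?_ hlt
        apply D.cl _ _ _ ae' ase
        rw [← hj]
        refine lt_of_le_of_lt ?_ h1
        rw [huu]
        exact (hcand e' he').2.2.2.1
      have down : ∀ e ∈ T, ∀ e' ∈ T, u e = u e' → ¬ S.h (u e) < a (s e) (S.τ (u e)) →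
          ¬ S.h (u e') < a (s e') (S.τ (u e')) → ∀ i, S.τ (u e) = i + 1 →
          ¬ b e' i < b e i := by
        intro e he e' he' huu h1 h2 i hi hlt
        obtain ⟨j, hj, ae, ase⟩ := acts e he
        obtain ⟨j', hj', ae', ase'⟩ := acts e' he'
        obtain rfl : j = i := by omega
        obtain rfl : j' = j := by rw [huu] at hj; omega
        refine S.no_between D F W hW hn (TF e' he') (hsuc e' he') (hcand e' he') (hmin e' he')
          (TF e he) j' hj' ae hlt ?_
        apply D.cl _ _ _ ae ase'
        obtain ⟨u1, u2, u3, u4, u5⟩ := hcand e he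
        have hu' := (hcand e' he').2.2.2.2
        rw [← huu] at hu'
        rw [← hj]
        refine lt_of_lt_of_le ?_ hu'
        refine lt_of_le_of_ne u4 ?_
        intro heq
        have h3 : a (s e) (S.τ (u e)) = S.h (u e) := le_antisymm (not_lt.1 h1) u5
        have r1 : u e = S.r e := by
          rcases u2.lt_or_eq with hc | hc
          · exact absurd heq (D.vert _ _ u1 hc)
          · apply S.hinj _ _ hc
            rw [← D.right e, ← hc, heq]
        have r2 : u e = S.r (s e) := by
          rcases u3.lt_or_eq with hc | hc
          · exact absurd h3 (D.vert _ _ (by rw [(hsuc e he).2.1]; exact u1) hc)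
          · apply S.hinj _ _ hc
            rw [← D.right (s e), ← hc, h3]
        have := hsimple e (TF e he) (s e) (hsuc e he).1 (hsuc e he).2.1.symm (r1.symm.trans r2)
        have h5 := (hsuc e he).2.2.1
        rw [← this] at h5
        exact lt_irrefl _ h5
      intro e he e' he' heq
      simp only [Prod.mk.injEq, decide_eq_decide] at heq
      obtain ⟨huu, hiff⟩ := heq
      obtain ⟨i, hi, ae, ase⟩ := acts e he
      obtain ⟨i', hi', ae', ase'⟩ := acts e' he'
      obtain rfl : i' = i := by rw [huu] at hi; omega
      by_contra hne
      by_cases hc : S.h (u e) < a (s e) (S.τ (u e))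
      · have hc' := hiff.1 hc
        have hsne : s e ≠ s e' := fun h => hne (succ_inj e he e' he' h)
        rcases lt_or_gt_of_ne (D.dist _ _ _ hsne ase ase') with h | h
        · exact up e he e' he' huu hc hc' i' hi h
        · exact up e' he' e he huu.symm hc' hc i' hi' h
      · have hc' := fun h => hc (hiff.2 h)
        rcases lt_or_gt_of_ne (D.dist _ _ _ hne ae ae') with h | h
        · exact down e' he' e he huu.symm hc' hc i' hi' h
        · exact down e he e' he' huu hc hc' i' hi h
  omega

end IncB

namespace IncB
variable {V E : Type}

open scoped Classical in
/-- Total number of (ordered) crossings before the time `T`. -/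
noncomputable def Sys.Phi [Fintype E] (S : Sys V E) (T : ℕ) (b : E → ℕ → ℝ) : ℕ :=
  ∑ j ∈ Finset.range T, ∑ p : E × E, if S.Cr b p.1 p.2 j then 1 else 0

open scoped Classical in
lemma prop4 {p q p' q' : Prop} (h : ((q → p) ∧ (p' → q')) ∨ ((p → q) ∧ (q' → p'))) :
    ((if ¬(q ↔ p') then 1 else 0) + (if ¬(p ↔ q') then 1 else 0) : ℕ) ≤
    (if ¬(p ↔ p') then 1 else 0) + (if ¬(q ↔ q') then 1 else 0) := by
  by_cases p <;> by_cases q <;> by_cases p' <;> by_cases q' <;> simp_all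

open scoped Classical in
lemma swap_ineq {E : Type} (s s' : E → ℝ) (A : E → Prop) (e f : E) (hef : e ≠ f) (he : A e)
    (hf : A f)
    (h : (s e < s f ∧ s' f < s' e) ∨ (s f < s e ∧ s' e < s' f)) (g k : E) :
    ((if A g ∧ A k ∧ ¬ (s (Equiv.swap e f g) < s (Equiv.swap e f k) ↔ s' g < s' k) then 1 else 0) +
    (if A g ∧ A k ∧ ¬ (s g < s k ↔ s' (Equiv.swap e f g) < s' (Equiv.swap e f k)) then 1 else 0)
      : ℕ) ≤
    (if A g ∧ A k ∧ ¬ (s g < s k ↔ s' g < s' k) then 1 else 0) +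
    (if A g ∧ A k ∧ ¬ (s (Equiv.swap e f g) < s (Equiv.swap e f k) ↔
      s' (Equiv.swap e f g) < s' (Equiv.swap e f k)) then 1 else 0) := by
  by_cases hA : A g ∧ A k
  swap
  · have h1 : ∀ Q : Prop, ¬ (A g ∧ A k ∧ Q) := fun Q hq => hA ⟨hq.1, hq.2.1⟩
    simp [h1]
  obtain ⟨hg, hk⟩ := hA
  simp only [hg, hk, true_and]
  apply prop4
  by_cases g1 : g = e
  · subst g1
    by_cases k1 : k = g
    · subst k1; simp
    by_cases k2 : k = f
    · subst k2
      simp only [Equiv.swap_apply_left, Equiv.swap_apply_right]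
      rcases h with h | h
      · left; constructor <;> intro <;> linarith
      · right; constructor <;> intro <;> linarith
    · rw [Equiv.swap_apply_left, Equiv.swap_apply_of_ne_of_ne k1 k2]
      rcases h with h | h
      · left; constructor <;> intro <;> linarith
      · right; constructor <;> intro <;> linarith
  by_cases g2 : g = f
  · subst g2
    by_cases k1 : k = g
    · subst k1; simp
    by_cases k2 : k = e
    · subst k2
      simp only [Equiv.swap_apply_left, Equiv.swap_apply_right]
      rcases h with h | h
      · right; constructor <;> intro <;> linarith
      · left; constructor <;> intro <;> linarith
    · rw [Equiv.swap_apply_right, Equiv.swap_apply_of_ne_of_ne k2 k1]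
      rcases h with h | h
      · right; constructor <;> intro <;> linarith
      · left; constructor <;> intro <;> linarith
  rw [Equiv.swap_apply_of_ne_of_ne g1 g2]
  by_cases k1 : k = e
  · subst k1
    rw [Equiv.swap_apply_left]
    rcases h with h | h
    · right; constructor <;> intro <;> linarith
    · left; constructor <;> intro <;> linarith
  by_cases k2 : k = f
  · subst k2
    rw [Equiv.swap_apply_right]
    rcases h with h | h
    · left; constructor <;> intro <;> linarith
    · right; constructor <;> intro <;> linarith
  rw [Equiv.swap_apply_of_ne_of_ne k1 k2]
  simp

lemma Sys.cross_eq (S : Sys V E) {a b : E → ℕ → ℝ} (D : S.Dr a b) {e f : E} {i : ℕ}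
    (hc : S.Cr b e f i) : a e (i+1) = a f (i+1) ∧
      ((b e i < b f i ∧ b f (i+1) < b e (i+1)) ∨ (b f i < b e i ∧ b e (i+1) < b f (i+1))) := by
  obtain ⟨h1, h2, h3, h4, h5⟩ := hc
  have hne : e ≠ f := by rintro rfl; exact h5 (by simp)
  have d1 := D.dist e f i hne h1 h2
  have d2 := D.dist e f (i+1) hne h3 h4
  have hx : ((b e i < b f i ∧ b f (i+1) < b e (i+1)) ∨
      (b f i < b e i ∧ b e (i+1) < b f (i+1))) := by
    rcases lt_or_gt_of_ne d1 with h | h <;> rcases lt_or_gt_of_ne d2 with h' | h'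
    · exact absurd (iff_of_true h h') h5
    · exact Or.inl ⟨h, h'⟩
    · exact Or.inr ⟨h, h'⟩
    · exact absurd (iff_of_false h.not_gt h'.not_gt) h5
  refine ⟨?_, hx⟩
  rcases lt_trichotomy (a e (i+1)) (a f (i+1)) with h | h | h
  · have := D.cl _ _ _ h1 h2 h
    have := D.cr _ _ _ h3 h4 h
    rcases hx with hx | hx <;> linarith
  · exact h
  · have := D.cl _ _ _ h2 h1 h
    have := D.cr _ _ _ h4 h3 h
    rcases hx with hx | hx <;> linarith

open scoped Classical in
/-- Exchange two crossing edges at the gaps in `G` and the critical times in `H`. -/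
lemma Sys.swap_gen [Fintype E] (S : Sys V E) {a b : E → ℕ → ℝ} (D : S.Dr a b) (T : ℕ)
    {e f : E} {i : ℕ} (hc : S.Cr b e f i) (hiT : i < T) (G H : ℕ → Prop)
    (hA : ∀ j, G j → (S.act e j ↔ S.act f j))
    (hB1 : ∀ j, (G j ↔ H j) ∨ j = i + 1)
    (hB2 : ∀ j, (G j ↔ H (j+1)) ∨ j = i)
    (hC1 : H (S.τ (S.l e)) → S.l e = S.l f)
    (hC2 : H (S.τ (S.r e)) → S.r e = S.r f)
    (hC3 : H (S.τ (S.l f)) → S.l e = S.l f)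
    (hC4 : H (S.τ (S.r f)) → S.r e = S.r f)
    (hD : ∀ j, H j → ((S.τ (S.l e) < j ∧ j < S.τ (S.r e)) ↔ (S.τ (S.l f) < j ∧ j < S.τ (S.r f))))
    (hE1 : ∀ j, j ≠ i → (G j ↔ G (j+1))) (hE2 : ¬ (G i ↔ G (i+1))) :
    ∃ a' b', S.Dr a' b' ∧ S.Phi T b' < S.Phi T b := by
  obtain ⟨hae, hbx⟩ := S.cross_eq D hc
  obtain ⟨c1, c2, c3, c4, c5⟩ := hc
  have hne : e ≠ f := by rintro rfl; exact c5 (by simp)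
  set σ := Equiv.swap e f with hσ
  have hae' : ∀ g, a (σ g) (i+1) = a g (i+1) := by
    intro g
    by_cases g1 : g = e
    · subst g1; rw [hσ, Equiv.swap_apply_left, hae]
    by_cases g2 : g = f
    · subst g2; rw [hσ, Equiv.swap_apply_right, hae]
    rw [hσ, Equiv.swap_apply_of_ne_of_ne g1 g2]
  have actσ : ∀ j, (S.act e j ↔ S.act f j) → ∀ g, S.act (σ g) j ↔ S.act g j := by
    intro j hj g
    by_cases g1 : g = e
    · subst g1; rw [hσ, Equiv.swap_apply_left, hj]
    by_cases g2 : g = f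
    · subst g2; rw [hσ, Equiv.swap_apply_right, hj]
    rw [hσ, Equiv.swap_apply_of_ne_of_ne g1 g2]
  let a' : E → ℕ → ℝ := fun g j => if H j then a (σ g) j else a g j
  let b' : E → ℕ → ℝ := fun g j => if G j then b (σ g) j else b g j
  have bT : ∀ g j, G j → b' g j = b (σ g) j := fun g j h => if_pos h
  have bF : ∀ g j, ¬ G j → b' g j = b g j := fun g j h => if_neg h
  have aT : ∀ g j, H j → a' g j = a (σ g) j := fun g j h => if_pos h
  have aF : ∀ g j, ¬ H j → a' g j = a g j := fun g j h => if_neg h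
  have aI : ∀ g, a' g (i+1) = a g (i+1) := by
    intro g
    by_cases h : H (i+1)
    · rw [aT _ _ h, hae']
    · rw [aF _ _ h]
  have aI' : ∀ g, a' g (i+1) = a (σ g) (i+1) := fun g => by rw [aI, hae']
  -- values of a' at critical times adjacent to a gap j
  have aG1 : ∀ g j, G j → a' g j = a (σ g) j := by
    intro g j hj
    rcases hB1 j with h | h
    · exact aT _ _ (h.1 hj)
    · subst h; exact aI' g
  have aG1' : ∀ g j, ¬ G j → a' g j = a g j := by
    intro g j hj
    rcases hB1 j with h | h
    · exact aF _ _ (fun h' => hj (h.2 h'))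
    · subst h; exact aI g
  have aG2 : ∀ g j, G j → a' g (j+1) = a (σ g) (j+1) := by
    intro g j hj
    rcases hB2 j with h | h
    · exact aT _ _ (h.1 hj)
    · subst h; exact aI' g
  have aG2' : ∀ g j, ¬ G j → a' g (j+1) = a g (j+1) := by
    intro g j hj
    rcases hB2 j with h | h
    · exact aF _ _ (fun h' => hj (h.2 h'))
    · subst h; exact aI g
  refine ⟨a', b', ⟨?_, ?_, ?_, ?_, ?_, ?_⟩, ?_⟩
  · intro g
    by_cases h : H (S.τ (S.l g))
    · rw [aT _ _ h]
      by_cases g1 : g = e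
      · subst g1; rw [hσ, Equiv.swap_apply_left, hC1 h, D.left]
      by_cases g2 : g = f
      · subst g2; rw [hσ, Equiv.swap_apply_right, ← hC3 h, D.left]
      rw [hσ, Equiv.swap_apply_of_ne_of_ne g1 g2, D.left]
    · rw [aF _ _ h, D.left]
  · intro g
    by_cases h : H (S.τ (S.r g))
    · rw [aT _ _ h]
      by_cases g1 : g = e
      · subst g1; rw [hσ, Equiv.swap_apply_left, hC2 h, D.right]
      by_cases g2 : g = f
      · subst g2; rw [hσ, Equiv.swap_apply_right, ← hC4 h, D.right]
      rw [hσ, Equiv.swap_apply_of_ne_of_ne g1 g2, D.right]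
    · rw [aF _ _ h, D.right]
  · intro g k j hgk h1 h2
    by_cases h : G j
    · rw [bT _ _ h, bT _ _ h]
      exact D.dist _ _ _ (fun h' => hgk (σ.injective h')) ((actσ j (hA j h) g).2 h1)
        ((actσ j (hA j h) k).2 h2)
    · rw [bF _ _ h, bF _ _ h]
      exact D.dist _ _ _ hgk h1 h2
  · intro g k j h1 h2 hlt
    by_cases h : G j
    · rw [bT _ _ h, bT _ _ h]
      rw [aG1 _ _ h, aG1 _ _ h] at hlt
      exact D.cr _ _ _ ((actσ j (hA j h) g).2 h1) ((actσ j (hA j h) k).2 h2) hlt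
    · rw [bF _ _ h, bF _ _ h]
      rw [aG1' _ _ h, aG1' _ _ h] at hlt
      exact D.cr _ _ _ h1 h2 hlt
  · intro g k j h1 h2 hlt
    by_cases h : G j
    · rw [bT _ _ h, bT _ _ h]
      rw [aG2 _ _ h, aG2 _ _ h] at hlt
      exact D.cl _ _ _ ((actσ j (hA j h) g).2 h1) ((actσ j (hA j h) k).2 h2) hlt
    · rw [bF _ _ h, bF _ _ h]
      rw [aG2' _ _ h, aG2' _ _ h] at hlt
      exact D.cl _ _ _ h1 h2 hlt
  · intro v g h1 h2
    by_cases h : H (S.τ v)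
    · rw [aT _ _ h]
      have hv := hD _ h
      by_cases g1 : g = e
      · subst g1; rw [hσ, Equiv.swap_apply_left]
        have := hv.1 ⟨h1, h2⟩
        exact D.vert _ _ this.1 this.2
      by_cases g2 : g = f
      · subst g2; rw [hσ, Equiv.swap_apply_right]
        have := hv.2 ⟨h1, h2⟩
        exact D.vert _ _ this.1 this.2
      rw [hσ, Equiv.swap_apply_of_ne_of_ne g1 g2]
      exact D.vert _ _ h1 h2
    · rw [aF _ _ h]
      exact D.vert _ _ h1 h2
  · unfold Sys.Phi
    let ps : E × E ≃ E × E := Equiv.prodCongr σ σ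
    have σσ : ∀ g, σ (σ g) = g := fun g => by simp [hσ]
    have Aef : (S.act e i ↔ S.act f i) := iff_of_true c1 c2
    have Aef' : (S.act e (i+1) ↔ S.act f (i+1)) := iff_of_true c3 c4
    have crA : ∀ (B : E → ℕ → ℝ) g k, S.Cr B g k i ↔ ((S.act g i ∧ S.act g (i+1)) ∧
        (S.act k i ∧ S.act k (i+1)) ∧ ¬ (B g i < B k i ↔ B g (i+1) < B k (i+1))) := by
      intro B g k
      exact ⟨fun ⟨h1, h2, h3, h4, h5⟩ => ⟨⟨h1, h3⟩, ⟨h2, h4⟩, h5⟩,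
        fun ⟨⟨h1, h3⟩, ⟨h2, h4⟩, h5⟩ => ⟨h1, h2, h3, h4, h5⟩⟩
    have crσ : ∀ (B : E → ℕ → ℝ) g k, S.Cr B (σ g) (σ k) i ↔ ((S.act g i ∧ S.act g (i+1)) ∧
        (S.act k i ∧ S.act k (i+1)) ∧
        ¬ (B (σ g) i < B (σ k) i ↔ B (σ g) (i+1) < B (σ k) (i+1))) := by
      intro B g k
      rw [crA, actσ i Aef, actσ i Aef, actσ _ Aef', actσ _ Aef']
    have hle : ∀ p : E × E, ((if S.Cr b' p.1 p.2 i then 1 else 0) +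
        (if S.Cr b' (σ p.1) (σ p.2) i then 1 else 0) : ℕ) ≤
        (if S.Cr b p.1 p.2 i then 1 else 0) + (if S.Cr b (σ p.1) (σ p.2) i then 1 else 0) := by
      rintro ⟨g, k⟩
      have key := swap_ineq (fun g => b g i) (fun g => b g (i+1))
        (fun g => S.act g i ∧ S.act g (i+1)) e f hne ⟨c1, c3⟩ ⟨c2, c4⟩ hbx g k
      simp only [crσ b, crσ b']
      simp only [crA b, crA b']
      by_cases h : G i
      · have h' : ¬ G (i+1) := fun h' => hE2 (iff_of_true h h')
        simp only [bT _ _ h, bF _ _ h', σσ]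
        convert key
      · have h' : G (i+1) := by by_contra h'; exact hE2 (iff_of_false h h')
        simp only [bF _ _ h, bT _ _ h', σσ]
        rw [add_comm]
        convert key
    have hsum : ∀ B : E → ℕ → ℝ, 2 * (∑ p : E × E, if S.Cr B p.1 p.2 i then 1 else 0) =
        ∑ p : E × E, ((if S.Cr B p.1 p.2 i then 1 else 0) +
        (if S.Cr B (σ p.1) (σ p.2) i then 1 else 0) : ℕ) := by
      intro B
      rw [Finset.sum_add_distrib, two_mul]
      congr 1
      exact (Equiv.sum_comp ps (fun p => if S.Cr B p.1 p.2 i then 1 else 0)).symm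
    have hstrict : (∑ p : E × E, if S.Cr b' p.1 p.2 i then 1 else 0) <
        (∑ p : E × E, if S.Cr b p.1 p.2 i then 1 else 0) := by
      have : 2 * (∑ p : E × E, if S.Cr b' p.1 p.2 i then 1 else 0) <
          2 * (∑ p : E × E, if S.Cr b p.1 p.2 i then 1 else 0) := by
        rw [hsum, hsum]
        apply Finset.sum_lt_sum (fun p _ => hle p)
        refine ⟨(e, f), Finset.mem_univ _, ?_⟩
        have n1 : S.Cr b e f i := ⟨c1, c2, c3, c4, c5⟩
        have n2 : ¬ S.Cr b' e f i := by
          rw [crA]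
          rintro ⟨-, -, h3⟩
          apply h3
          by_cases h : G i
          · have h' : ¬ G (i+1) := fun h' => hE2 (iff_of_true h h')
            simp only [bT _ _ h, bF _ _ h', hσ, Equiv.swap_apply_left, Equiv.swap_apply_right]
            rcases hbx with hb | hb
            · exact iff_of_false hb.1.not_gt hb.2.not_gt
            · exact iff_of_true hb.1 hb.2
          · have h' : G (i+1) := by by_contra h'; exact hE2 (iff_of_false h h')
            simp only [bF _ _ h, bT _ _ h', hσ, Equiv.swap_apply_left, Equiv.swap_apply_right]
            rcases hbx with hb | hb
            · exact iff_of_true hb.1 hb.2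
            · exact iff_of_false hb.1.not_gt hb.2.not_gt
        have n3 : ¬ S.Cr b' f e i := by
          rw [crA]
          rintro ⟨-, -, h3⟩
          apply h3
          by_cases h : G i
          · have h' : ¬ G (i+1) := fun h' => hE2 (iff_of_true h h')
            simp only [bT _ _ h, bF _ _ h', hσ, Equiv.swap_apply_left, Equiv.swap_apply_right]
            rcases hbx with hb | hb
            · exact iff_of_true hb.1 hb.2
            · exact iff_of_false hb.1.not_gt hb.2.not_gt
          · have h' : G (i+1) := by by_contra h'; exact hE2 (iff_of_false h h')
            simp only [bF _ _ h, bT _ _ h', hσ, Equiv.swap_apply_left, Equiv.swap_apply_right]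
            rcases hbx with hb | hb
            · exact iff_of_false hb.1.not_gt hb.2.not_gt
            · exact iff_of_true hb.1 hb.2
        have n3' : ¬ S.Cr b' (σ e) (σ f) i := by
          rw [hσ, Equiv.swap_apply_left, Equiv.swap_apply_right]; exact n3
        simp only [n1, n2, n3', if_true, if_false]
        omega
      omega
    apply Finset.sum_lt_sum
    · intro j _
      by_cases hji : j = i
      swap
      · by_cases h : G j
        · have h' := (hE1 j hji).1 h
          rw [← Equiv.sum_comp ps (fun p => if S.Cr b p.1 p.2 j then 1 else 0)]
          apply le_of_eq
          apply Finset.sum_congr rfl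
          rintro ⟨g, k⟩ _
          have : S.Cr b' g k j ↔ S.Cr b (σ g) (σ k) j := by
            unfold Sys.Cr
            rw [bT _ _ h, bT _ _ h, bT _ _ h', bT _ _ h', actσ j (hA j h), actσ j (hA j h),
              actσ _ (hA _ h'), actσ _ (hA _ h')]
          simp only [this]
          rfl
        · have h' := fun h1 => h ((hE1 j hji).2 h1)
          apply le_of_eq
          apply Finset.sum_congr rfl
          rintro ⟨g, k⟩ _
          have : S.Cr b' g k j ↔ S.Cr b g k j := by
            unfold Sys.Cr
            rw [bF _ _ h, bF _ _ h, bF _ _ h', bF _ _ h']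
          simp only [this]
      · subst hji
        exact hstrict.le
    · exact ⟨i, Finset.mem_range.2 hiT, hstrict⟩

/-- Every drawing can be replaced by one without crossings of adjacent edges, with no more
crossings in total. -/
lemma Sys.uncross [Fintype E] (S : Sys V E) (T : ℕ) (hT : ∀ e i, S.act e i → i < T) :
    ∀ (n : ℕ) (a b : E → ℕ → ℝ), S.Dr a b → S.Phi T b = n →
    ∃ a' b', S.Dr a' b' ∧ S.Phi T b' ≤ n ∧
      ∀ e f i, S.Cr b' e f i → S.l e ≠ S.l f ∧ S.r e ≠ S.r f := by
  intro n
  induction n using Nat.strong_induction_on with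
  | _ n ih =>
    intro a b D hn
    by_cases hgood : ∀ e f i, S.Cr b e f i → S.l e ≠ S.l f ∧ S.r e ≠ S.r f
    · exact ⟨a, b, D, hn.le, hgood⟩
    push Not at hgood
    obtain ⟨e, f, i, hc, hadj⟩ := hgood
    have hiT : i < T := hT e i hc.1
    obtain ⟨c1, c2, c3, c4, -⟩ := id hc
    have c11 := c1.1
    have c21 := c2.1
    have c32 := c3.2
    have c42 := c4.2
    have : ∃ a' b', S.Dr a' b' ∧ S.Phi T b' < S.Phi T b := by
      by_cases hl : S.l e = S.l f
      · refine S.swap_gen D T hc hiT (fun j => j ≤ i) (fun j => j ≤ i + 1) ?_ ?_ ?_ ?_ ?_ ?_ ?_ ?_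
          ?_ ?_
        · intro j hj
          have hj' : j ≤ i := hj
          unfold Sys.act
          rw [hl]
          omega
        · intro j; omega
        · intro j; omega
        · intro _; exact hl
        · intro h; omega
        · intro _; exact hl
        · intro h; omega
        · intro j hj
          rw [hl]
          omega
        · intro j hj; omega
        · simp
      · have hr := hadj hl
        refine S.swap_gen D T hc hiT (fun j => i + 1 ≤ j) (fun j => i + 1 ≤ j) ?_ ?_ ?_ ?_ ?_ ?_ ?_
          ?_ ?_ ?_
        · intro j hj
          unfold Sys.act
          rw [hr]
          omega
        · intro j; simp
        · intro j; omega
        · intro h; omega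
        · intro _; exact hr
        · intro h; omega
        · intro _; exact hr
        · intro j hj
          rw [hr]
          omega
        · intro j hj; omega
        · simp
    obtain ⟨a', b', D', hlt⟩ := this
    obtain ⟨a'', b'', D'', hle, hg⟩ := ih _ (hn ▸ hlt) a' b' D' rfl
    exact ⟨a'', b'', D'', by omega, hg⟩

end IncB

namespace IncB
variable {V E : Type}

lemma card_colorings [Fintype V] [DecidableEq V] (s : ℕ) (Q : Finset V) :
    ((Finset.univ : Finset (V → Fin (s+1))).filter (fun χ => ∀ v ∈ Q, χ v = 0)).card
      * (s+1) ^ Q.card = (s+1) ^ Fintype.card V := by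
  have h1 : ((Finset.univ : Finset (V → Fin (s+1))).filter (fun χ => ∀ v ∈ Q, χ v = 0)) =
      Fintype.piFinset (fun v => if v ∈ Q then ({0} : Finset (Fin (s+1))) else Finset.univ) := by
    ext χ
    simp only [Finset.mem_filter, Finset.mem_univ, true_and, Fintype.mem_piFinset]
    refine forall_congr' fun v => ?_
    by_cases h : v ∈ Q <;> simp [h]
  have h2 : ∀ v : V, (if v ∈ Q then ({0} : Finset (Fin (s+1))) else Finset.univ).card
      = if v ∈ Q then 1 else (s+1) := by
    intro v; split_ifs <;> simp
  rw [h1, Fintype.card_piFinset]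
  simp only [h2]
  have h3 : (s+1) ^ Q.card = ∏ v : V, if v ∈ Q then (s+1) else 1 := by
    rw [Finset.prod_ite_mem, Finset.univ_inter, Finset.prod_const]
  rw [h3, ← Finset.prod_mul_distrib]
  have : ∀ v : V, ((if v ∈ Q then 1 else (s+1)) * if v ∈ Q then (s+1) else 1) = s+1 := by
    intro v; split_ifs <;> simp
  simp [this, Finset.prod_const, Finset.card_univ]

open scoped Classical in
theorem Sys.crossing [Fintype V] [Fintype E] (S : Sys V E) {a b : E → ℕ → ℝ} (D : S.Dr a b)
    (hsimple : ∀ e f, S.l e = S.l f → S.r e = S.r f → e = f)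
    (T : ℕ) (hT : ∀ e i, S.act e i → i < T) (t : ℕ) (ht : 1 ≤ t) :
    Fintype.card E * t ^ 2 ≤ 3 * Fintype.card V * t ^ 3 + S.Phi T b := by
  obtain ⟨a', b', D', hphi, hgood⟩ := S.uncross T hT _ a b D rfl
  obtain ⟨s, rfl⟩ : ∃ s, t = s + 1 := ⟨t - 1, by omega⟩
  let C : Finset (E × E) := Finset.univ.filter (fun p => ∃ i, S.Cr b' p.1 p.2 i)
  have hC : C.card ≤ S.Phi T b := by
    refine le_trans ?_ hphi
    unfold Sys.Phi
    rw [Finset.sum_comm, Finset.card_filter]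
    apply Finset.sum_le_sum
    rintro ⟨e, f⟩ _
    split_ifs with h
    · obtain ⟨i, hi⟩ := h
      have hiT : i ∈ Finset.range T := Finset.mem_range.2 (hT e i hi.1)
      refine le_trans ?_ (Finset.single_le_sum (f := fun i => if S.Cr b' e f i then 1 else 0)
        (fun _ _ => Nat.zero_le _) hiT)
      simp [hi]
    · exact Nat.zero_le _
  -- planarity for every vertex subset
  have hpl : ∀ W : Finset V, (Finset.univ.filter (fun e => S.l e ∈ W ∧ S.r e ∈ W)).card ≤
      3 * W.card + (C.filter (fun p => (S.l p.1 ∈ W ∧ S.r p.1 ∈ W) ∧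
        (S.l p.2 ∈ W ∧ S.r p.2 ∈ W))).card := by
    intro W
    set F := (Finset.univ.filter (fun e => S.l e ∈ W ∧ S.r e ∈ W)) with hF
    set CW := (C.filter (fun p => (S.l p.1 ∈ W ∧ S.r p.1 ∈ W) ∧
        (S.l p.2 ∈ W ∧ S.r p.2 ∈ W))) with hCW
    have h1 : (F \ CW.image Prod.fst).card ≤ 3 * W.card := by
      apply S.planar D'
      · intro e he
        exact (Finset.mem_filter.1 (Finset.mem_sdiff.1 he).1).2
      · intro e he f hf i hc
        rw [Finset.mem_sdiff] at he hf
        apply he.2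
        rw [Finset.mem_image]
        exact ⟨(e, f), Finset.mem_filter.2 ⟨Finset.mem_filter.2 ⟨Finset.mem_univ _, i, hc⟩,
          (Finset.mem_filter.1 he.1).2, (Finset.mem_filter.1 hf.1).2⟩, rfl⟩
      · intro e _ f _
        exact hsimple e f
    have h2 := Finset.le_card_sdiff (CW.image Prod.fst) F
    have h3 : (CW.image Prod.fst).card ≤ CW.card := Finset.card_image_le
    omega
  let Wf : (V → Fin (s+1)) → Finset V := fun χ => Finset.univ.filter (fun v => χ v = 0)
  have hmem : ∀ χ v, v ∈ Wf χ ↔ χ v = 0 := by intro χ v; simp [Wf]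
  let K : Finset V → ℕ := fun Q =>
    ((Finset.univ : Finset (V → Fin (s+1))).filter (fun χ => ∀ v ∈ Q, χ v = 0)).card
  have hK : ∀ Q, K Q * (s+1) ^ Q.card = (s+1) ^ Fintype.card V := fun Q => card_colorings s Q
  have hsum : ∑ e : E, K {S.l e, S.r e} ≤ 3 * ∑ v : V, K {v} +
      ∑ p ∈ C, K {S.l p.1, S.r p.1, S.l p.2, S.r p.2} := by
    have := Finset.sum_le_sum (s := (Finset.univ : Finset (V → Fin (s+1))))
      (fun χ _ => hpl (Wf χ))
    rw [Finset.sum_add_distrib, ← Finset.mul_sum] at this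
    simp only [Finset.card_filter, hmem, Wf] at this
    simp only [K, Finset.card_filter]
    rw [Finset.sum_comm, Finset.sum_comm (s := (Finset.univ : Finset V)),
      Finset.sum_comm (s := C)]
    simpa [and_assoc, Finset.sum_filter, C] using this
  have k1 : ∀ v : V, K {v} * (s+1) = (s+1) ^ Fintype.card V := by
    intro v; simpa using hK {v}
  have k2 : ∀ e : E, K {S.l e, S.r e} * (s+1) ^ 2 = (s+1) ^ Fintype.card V := by
    intro e
    have hne : S.l e ≠ S.r e := fun h => by have := S.hlr e; rw [h] at this; omega
    have := hK {S.l e, S.r e}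
    rwa [Finset.card_pair hne] at this
  have k4 : ∀ p ∈ C, K {S.l p.1, S.r p.1, S.l p.2, S.r p.2} * (s+1) ^ 4
      = (s+1) ^ Fintype.card V := by
    rintro ⟨e, f⟩ hp
    obtain ⟨i, hi⟩ := (Finset.mem_filter.1 hp).2
    obtain ⟨n1, n2⟩ := hgood e f i hi
    obtain ⟨c1, c2, -⟩ := hi
    have c11 := c1.1
    have c12 := c1.2
    have c21 := c2.1
    have c22 := c2.2
    simp only at c11 c12 c21 c22
    have n3 : S.l e ≠ S.r e := fun h => by rw [h] at c11; omega
    have n4 : S.l e ≠ S.r f := fun h => by rw [h] at c11; omega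
    have n5 : S.r e ≠ S.l f := fun h => by rw [h] at c12; omega
    have n6 : S.l f ≠ S.r f := fun h => by rw [h] at c21; omega
    have := hK {S.l e, S.r e, S.l f, S.r f}
    have hc : ({S.l e, S.r e, S.l f, S.r f} : Finset V).card = 4 := by
      rw [Finset.card_insert_of_notMem, Finset.card_insert_of_notMem, Finset.card_pair n6]
      · simp [n5, n2]
      · simp [n3, n1, n4]
    rwa [hc] at this
  have hpos : 0 < (s+1) ^ Fintype.card V := by positivity
  have hmul := Nat.mul_le_mul_right ((s+1)^4) hsum
  rw [add_mul, Finset.sum_mul, mul_assoc, Finset.sum_mul, Finset.sum_mul] at hmul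
  rw [Finset.sum_congr rfl k4] at hmul
  rw [Finset.sum_congr rfl (fun e _ => show K {S.l e, S.r e} * (s+1)^4 =
    (s+1) ^ Fintype.card V * (s+1)^2 by rw [← k2 e]; ring)] at hmul
  rw [Finset.sum_congr rfl (fun v _ => show K {v} * (s+1)^4 =
    (s+1) ^ Fintype.card V * (s+1)^3 by rw [← k1 v]; ring)] at hmul
  simp only [Finset.sum_const, Finset.card_univ, smul_eq_mul] at hmul
  have h5 : (s+1) ^ Fintype.card V * (Fintype.card E * (s+1)^2) ≤
      (s+1) ^ Fintype.card V * (3 * Fintype.card V * (s+1)^3 + C.card) := by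
    nlinarith [hmul]
  have := Nat.le_of_mul_le_mul_left h5 hpos
  omega

lemma opt_t (E N X : ℕ) (h : ∀ t : ℕ, 1 ≤ t → E * t ^ 2 ≤ 3 * N * t ^ 3 + X) (h0 : N = 0 → E = 0) :
    E ≤ 6 * N ∨ E ^ 3 ≤ 288 * X * N ^ 2 := by
  rcases le_or_gt E (6 * N) with hc | hc
  · exact Or.inl hc
  right
  have hN : 0 < N := by
    rcases Nat.eq_zero_or_pos N with h1 | h1
    · have := h0 h1; omega
    · exact h1
  set t := E / (6 * N) with ht
  have t1 : 1 ≤ t := (Nat.one_le_div_iff (by omega)).2 hc.le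
  have t2 : t * (6 * N) ≤ E := Nat.div_mul_le_self _ _
  have t3 : E < (t + 1) * (6 * N) := by
    have := Nat.lt_mul_div_succ E (b := 6 * N) (by omega)
    rw [mul_comm]; exact this
  have h1 := h t t1
  have h2 : E * t ^ 2 ≤ 2 * X := by nlinarith [Nat.mul_le_mul_right (t^2) t2]
  have h3 : E ≤ 12 * N * t := by nlinarith
  calc E ^ 3 = E * E ^ 2 := by ring
    _ ≤ E * (12 * N * t) ^ 2 := by gcongr
    _ = 144 * N ^ 2 * (E * t ^ 2) := by ring
    _ ≤ 144 * N ^ 2 * (2 * X) := by gcongr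
    _ = 288 * X * N ^ 2 := by ring

end IncB

namespace IncB

lemma exists_times (K : Finset ℝ) : ∃ (c : ℕ → ℝ) (k : ℕ), StrictMono c ∧
    ∀ x, x ∈ K ↔ ∃ i < k, c i = x := by
  induction K using Finset.induction_on_max with
  | empty => exact ⟨fun i => (i : ℝ), 0, Nat.strictMono_cast, by simp⟩
  | insert a s has ih =>
    obtain ⟨c, k, hc, hk⟩ := ih
    refine ⟨fun i => if i < k then c i else a + ((i : ℝ) - k), k + 1, ?_, ?_⟩
    · apply strictMono_nat_of_lt_succ
      intro n
      by_cases h1 : n + 1 < k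
      · rw [if_pos (by omega), if_pos h1]; exact hc (Nat.lt_succ_self n)
      · rw [if_neg h1]
        by_cases h2 : n < k
        · rw [if_pos h2]
          have h3 : n + 1 = k := by omega
          have := has (c n) ((hk _).2 ⟨n, h2, rfl⟩)
          rw [← h3]; linarith
        · rw [if_neg h2]; push_cast; linarith
    · intro x
      rw [Finset.mem_insert, hk]
      constructor
      · rintro (rfl | ⟨i, hi, rfl⟩)
        · exact ⟨k, Nat.lt_succ_self k, by simp⟩
        · exact ⟨i, by omega, by simp [hi]⟩
      · rintro ⟨i, hi, rfl⟩
        by_cases h : i < k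
        · right; exact ⟨i, h, by simp [h]⟩
        · left
          have : i = k := by omega
          simp [this]

/-- `p` lies on the graph of `g` over `J`. -/
def On (J : Set ℝ) (g : ℝ → ℝ) (p : ℝ × ℝ) : Prop := p.1 ∈ J ∧ g p.1 = p.2

lemma nocross {J J' : Set ℝ} {g g' : ℝ → ℝ} (hg : ContinuousOn g J) (hg' : ContinuousOn g' J')
    {x s : ℝ} (h1 : Set.uIcc x s ⊆ J) (h2 : Set.uIcc x s ⊆ J')
    (hno : ∀ z ∈ Set.uIcc x s, z ≠ x → g z ≠ g' z) (hx : g x < g' x) : g s < g' s := by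
  by_contra hc
  push Not at hc
  obtain ⟨z, hz, he⟩ := isPreconnected_uIcc.intermediate_value₂ Set.left_mem_uIcc
    Set.right_mem_uIcc (hg.mono h1) (hg'.mono h2) hx.le hc
  refine hno z hz ?_ he
  rintro rfl
  exact hx.ne he

open scoped Classical in
theorem arcs_draw {ι V E : Type} [Fintype ι] [Fintype V] [Fintype E]
    (J : ι → Set ℝ) (g : ι → ℝ → ℝ) (hJ : ∀ i, (J i).OrdConnected)
    (hg : ∀ i, ContinuousOn (g i) (J i)) (M : ℕ)
    (hM : ∀ i j, i ≠ j → {x | x ∈ J i ∧ x ∈ J j ∧ g i x = g j x}.Finite ∧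
      {x | x ∈ J i ∧ x ∈ J j ∧ g i x = g j x}.ncard ≤ M)
    (pos : V → ℝ × ℝ) (hpos : Function.Injective pos)
    (l r : E → V) (α : E → ι) (hl : ∀ e, On (J (α e)) (g (α e)) (pos (l e)))
    (hr : ∀ e, On (J (α e)) (g (α e)) (pos (r e)))
    (hlr : ∀ e, (pos (l e)).1 < (pos (r e)).1)
    (hno : ∀ e v, On (J (α e)) (g (α e)) (pos v) → (pos (l e)).1 < (pos v).1 →
      (pos v).1 < (pos (r e)).1 → False)
    (hsimple : ∀ e f, l e = l f → r e = r f → e = f) (t : ℕ) (ht : 1 ≤ t) :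
    Fintype.card E * t ^ 2 ≤ 3 * Fintype.card V * t ^ 3 + Fintype.card ι ^ 2 * M := by
  let A : ι × ι → Finset ℝ := fun p => if h : p.1 ≠ p.2 then (hM p.1 p.2 h).1.toFinset else ∅
  have hA : ∀ p, (A p).card ≤ M := by
    intro p
    simp only [A]
    split_ifs with h
    · rw [← Set.ncard_eq_toFinset_card _ (hM p.1 p.2 h).1]; exact (hM p.1 p.2 h).2
    · simp
  have hAm : ∀ i j x, i ≠ j → x ∈ J i → x ∈ J j → g i x = g j x → x ∈ A (i, j) := by
    intro i j x h h1 h2 h3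
    simp only [A]
    rw [dif_pos h]
    simp [h1, h2, h3]
  obtain ⟨c, k, hc, hk⟩ := exists_times
    ((Finset.univ.image fun v => (pos v).1) ∪ Finset.univ.biUnion A)
  have hag : ∀ i j x, i ≠ j → x ∈ J i → x ∈ J j → g i x = g j x → ∃ n, c n = x := by
    intro i j x h h1 h2 h3
    obtain ⟨n, -, hn⟩ := (hk x).1 (Finset.mem_union_right _
      (Finset.mem_biUnion.2 ⟨(i, j), Finset.mem_univ _, hAm i j x h h1 h2 h3⟩))
    exact ⟨n, hn⟩
  have hτ : ∀ v, ∃ n, c n = (pos v).1 := by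
    intro v
    obtain ⟨n, -, hn⟩ := (hk (pos v).1).1 (Finset.mem_union_left _
      (Finset.mem_image_of_mem _ (Finset.mem_univ v)))
    exact ⟨n, hn⟩
  choose τ hτ using hτ
  have hgap : ∀ n m, ¬ (c n < c m ∧ c m < c (n+1)) := by
    rintro n m ⟨h1, h2⟩
    have := hc.lt_iff_lt.1 h1
    have := hc.lt_iff_lt.1 h2
    omega
  let S : Sys V E :=
    { τ := τ, h := fun v => (pos v).2, l := l, r := r
      hlr := fun e => by
        have := hlr e
        rw [← hτ, ← hτ] at this
        exact hc.lt_iff_lt.1 this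
      hinj := fun u v h1 h2 => by
        apply hpos
        refine Prod.ext ?_ h2
        rw [← hτ, ← hτ, h1] }
  let a : E → ℕ → ℝ := fun e i => g (α e) (c i)
  let b : E → ℕ → ℝ := fun e i => g (α e) ((c i + c (i+1)) / 2)
  have hact : ∀ e i, S.act e i → (pos (l e)).1 ≤ c i ∧ c (i+1) ≤ (pos (r e)).1 := by
    intro e i h
    rw [← hτ, ← hτ]
    exact ⟨hc.monotone h.1, hc.monotone h.2⟩
  have hsub : ∀ e i, S.act e i → Set.Icc (c i) (c (i+1)) ⊆ J (α e) := by
    intro e i h x hx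
    obtain ⟨h1, h2⟩ := hact e i h
    exact (hJ (α e)).out (hl e).1 (hr e).1 ⟨h1.trans hx.1, hx.2.trans h2⟩
  have hlt : ∀ i, c i < c (i+1) := fun i => hc (Nat.lt_succ_self i)
  have huniq : ∀ e f, α e = α f → ∀ v w, On (J (α e)) (g (α e)) (pos v) →
      On (J (α f)) (g (α f)) (pos w) → (pos v).1 = (pos w).1 → v = w := by
    intro e f h v w hv hw hvw
    apply hpos
    refine Prod.ext hvw ?_
    rw [← hv.2, ← hw.2, h, hvw]
  have hsame : ∀ e f i, S.act e i → S.act f i → α e = α f → e = f := by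
    intro e f i he hf h
    obtain ⟨e1, e2⟩ := hact e i he
    obtain ⟨f1, f2⟩ := hact f i hf
    have := hlt i
    apply hsimple
    · apply huniq e f h _ _ (hl e) (hl f)
      rcases lt_trichotomy (pos (l e)).1 (pos (l f)).1 with h1 | h1 | h1
      · exact (hno e (l f) (h ▸ hl f) h1 (by linarith)).elim
      · exact h1
      · exact (hno f (l e) (h ▸ hl e) h1 (by linarith)).elim
    · apply huniq e f h _ _ (hr e) (hr f)
      rcases lt_trichotomy (pos (r e)).1 (pos (r f)).1 with h1 | h1 | h1
      · exact (hno f (r e) (h ▸ hr e) (by linarith) h1).elim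
      · exact h1
      · exact (hno e (r f) (h ▸ hr f) (by linarith) h1).elim
  have key : ∀ e f i x, S.act e i → S.act f i → (x = c i ∨ x = c (i+1)) →
      g (α e) x < g (α f) x → b e i < b f i := by
    intro e f i x he hf hx hlt'
    have hne : α e ≠ α f := by
      intro h; rw [h] at hlt'; exact lt_irrefl _ hlt'
    have := hlt i
    have hmid : Set.uIcc x ((c i + c (i+1)) / 2) ⊆ Set.Icc (c i) (c (i+1)) := by
      apply Set.uIcc_subset_Icc
      · rcases hx with rfl | rfl
        · exact ⟨le_rfl, this.le⟩
        · exact ⟨this.le, le_rfl⟩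
      · constructor <;> linarith
    apply nocross (hg (α e)) (hg (α f)) (hmid.trans (hsub e i he)) (hmid.trans (hsub f i hf)) _ hlt'
    intro z hz hzx hze
    obtain ⟨n, hn⟩ := hag (α e) (α f) z hne (hsub e i he (hmid hz)) (hsub f i hf (hmid hz)) hze
    apply hgap i n
    rw [hn]
    rcases hx with rfl | rfl
    · rw [Set.uIcc_of_le (by linarith)] at hz
      exact ⟨lt_of_le_of_ne hz.1 (Ne.symm hzx), by linarith [hz.2]⟩
    · rw [Set.uIcc_of_ge (by linarith)] at hz
      exact ⟨by linarith [hz.1], lt_of_le_of_ne hz.2 hzx⟩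
  have D : S.Dr a b :=
    { left := fun e => by
        change g (α e) (c (τ (l e))) = (pos (l e)).2
        rw [hτ]; exact (hl e).2
      right := fun e => by
        change g (α e) (c (τ (r e))) = (pos (r e)).2
        rw [hτ]; exact (hr e).2
      dist := fun e f i hef he hf hb => by
        have hne : α e ≠ α f := fun h => hef (hsame e f i he hf h)
        have := hlt i
        have hm : (c i + c (i+1)) / 2 ∈ Set.Icc (c i) (c (i+1)) := by constructor <;> linarith
        obtain ⟨n, hn⟩ := hag (α e) (α f) _ hne (hsub e i he hm) (hsub f i hf hm) hb
        apply hgap i n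
        rw [hn]
        constructor <;> linarith
      cr := fun e f i he hf h => key e f i (c i) he hf (Or.inl rfl) h
      cl := fun e f i he hf h => key e f i (c (i+1)) he hf (Or.inr rfl) h
      vert := fun v e h1 h2 h3 => by
        have h1' := hc h1
        have h2' := hc h2
        change c (τ (l e)) < c (τ v) at h1'
        change c (τ v) < c (τ (r e)) at h2'
        change g (α e) (c (τ v)) = (pos v).2 at h3
        rw [hτ, hτ] at h1' h2'
        rw [hτ] at h3
        exact hno e v ⟨(hJ (α e)).out (hl e).1 (hr e).1 ⟨h1'.le, h2'.le⟩, h3⟩ h1' h2' }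
  have hT : ∀ e i, S.act e i → i < ∑ e, τ (r e) := by
    intro e i h
    exact lt_of_lt_of_le h.2 (Finset.single_le_sum (f := fun e => τ (r e))
      (fun _ _ => Nat.zero_le _) (Finset.mem_univ e))
  have hmain := S.crossing D hsimple _ hT t ht
  refine hmain.trans (Nat.add_le_add_left ?_ _)
  -- counting crossings
  unfold Sys.Phi
  rw [← Finset.sum_product', ← Finset.card_filter]
  have hcard : ((Finset.univ : Finset (ι × ι)).sigma A).card ≤ Fintype.card ι ^ 2 * M := by
    rw [Finset.card_sigma]
    refine (Finset.sum_le_card_nsmul _ _ M (fun p _ => hA p)).trans ?_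
    rw [Finset.card_univ, Fintype.card_prod, smul_eq_mul, sq]
  refine le_trans ?_ hcard
  apply Finset.card_le_card_of_injOn
    (fun q => (⟨(α q.2.1, α q.2.2), c (q.1+1)⟩ : (_ : ι × ι) × ℝ))
  · rintro ⟨j, e, f⟩ hq
    have hcr : S.Cr b e f j := by simpa using (Finset.mem_filter.1 hq).2
    have heq := (S.cross_eq D hcr).1
    obtain ⟨c1, c2, c3, c4, c5⟩ := hcr
    rw [Finset.mem_coe, Finset.mem_sigma]
    refine ⟨Finset.mem_univ _, ?_⟩
    apply hAm
    · intro h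
      have := hsame e f j c1 c2 h
      subst this
      simp at c5
    · exact hsub e j c1 ⟨(hlt j).le, le_rfl⟩
    · exact hsub f j c2 ⟨(hlt j).le, le_rfl⟩
    · exact heq
  · rintro ⟨j, e, f⟩ hq ⟨j', e', f'⟩ hq' h
    have hcr : S.Cr b e f j := by simpa using (Finset.mem_filter.1 hq).2
    have hcr' : S.Cr b e' f' j' := by simpa using (Finset.mem_filter.1 hq').2
    simp only [Sigma.mk.injEq, Prod.mk.injEq, heq_eq_eq] at h
    obtain ⟨⟨ha1, ha2⟩, hj⟩ := h
    have hj := hc.injective hj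
    have hj : j = j' := by omega
    subst hj
    rw [hsame e e' j hcr.1 hcr'.1 ha1, hsame f f' j hcr.2.1 hcr'.2.1 ha2]

open scoped Classical in
theorem arcs {ι : Type} [Fintype ι] (P : Finset (ℝ × ℝ))
    (J : ι → Set ℝ) (g : ι → ℝ → ℝ) (hJ : ∀ i, (J i).OrdConnected)
    (hg : ∀ i, ContinuousOn (g i) (J i)) (M m : ℕ)
    (hM : ∀ i j, i ≠ j → {x | x ∈ J i ∧ x ∈ J j ∧ g i x = g j x}.Finite ∧
      {x | x ∈ J i ∧ x ∈ J j ∧ g i x = g j x}.ncard ≤ M)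
    (hm : ∀ p ∈ P, ∀ q ∈ P, p ≠ q →
      (Finset.univ.filter fun i => On (J i) (g i) p ∧ On (J i) (g i) q).card ≤ m) :
    ∃ X : ℕ, (X ≤ 6 * P.card ∨ X ^ 3 ≤ 288 * (Fintype.card ι ^ 2 * M) * P.card ^ 2) ∧
      ∑ p ∈ P, (Finset.univ.filter fun i => On (J i) (g i) p).card ≤ Fintype.card ι + m * X := by
  let V := {p // p ∈ P}
  let cons : ι → V → V → Prop := fun i p q => On (J i) (g i) p.1 ∧ On (J i) (g i) q.1 ∧
    p.1.1 < q.1.1 ∧ ∀ v : V, On (J i) (g i) v.1 → p.1.1 < v.1.1 → v.1.1 < q.1.1 → False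
  let E := {pq : V × V // ∃ i, cons i pq.1 pq.2}
  have hV : Fintype.card V = P.card := Fintype.card_coe P
  refine ⟨Fintype.card E, ?_, ?_⟩
  · rw [← hV]
    apply opt_t
    · intro t ht
      refine arcs_draw J g hJ hg M hM (fun v : V => v.1) Subtype.val_injective
        (fun e : E => e.1.1) (fun e => e.1.2) (fun e => e.2.choose)
        (fun e => e.2.choose_spec.1) (fun e => e.2.choose_spec.2.1)
        (fun e => e.2.choose_spec.2.2.1) (fun e => e.2.choose_spec.2.2.2) ?_ t ht
      intro e f h1 h2
      exact Subtype.ext (Prod.ext h1 h2)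
    · intro h
      rw [Fintype.card_eq_zero_iff] at h ⊢
      exact ⟨fun e => h.elim e.1.1⟩
  · have h1 : ∑ p ∈ P, (Finset.univ.filter fun i => On (J i) (g i) p).card =
        ∑ i, (Finset.univ.filter fun p : V => On (J i) (g i) p.1).card := by
      rw [← Finset.sum_coe_sort]
      simp only [Finset.card_filter]
      rw [Finset.sum_comm]
    have h2 : ∀ i, (Finset.univ.filter fun p : V => On (J i) (g i) p.1).card ≤
        1 + (Finset.univ.filter fun pq : V × V => cons i pq.1 pq.2).card := by
      intro i
      set S := (Finset.univ.filter fun p : V => On (J i) (g i) p.1) with hS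
      set Q := (Finset.univ.filter fun pq : V × V => cons i pq.1 pq.2) with hQ
      have hs : ∀ p q, p ∈ S → q ∈ S → p.1.1 < q.1.1 → p ∈ Q.image Prod.fst := by
        intro p q hp hq hpq
        have hne : (S.filter fun v => p.1.1 < v.1.1).Nonempty :=
          ⟨q, Finset.mem_filter.2 ⟨hq, hpq⟩⟩
        obtain ⟨v, hv, hmin⟩ := Finset.exists_min_image _ (fun v : V => v.1.1) hne
        rw [Finset.mem_filter] at hv
        refine Finset.mem_image.2 ⟨(p, v), Finset.mem_filter.2 ⟨Finset.mem_univ _,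
          (Finset.mem_filter.1 hp).2, (Finset.mem_filter.1 hv.1).2, hv.2, ?_⟩, rfl⟩
        intro w hw h1 h2
        have := hmin w (Finset.mem_filter.2 ⟨Finset.mem_filter.2 ⟨Finset.mem_univ _, hw⟩, h1⟩)
        simp only at h2 this
        linarith
      have h3 : (S \ Q.image Prod.fst).card ≤ 1 := by
        rw [Finset.card_le_one]
        intro p hp q hq
        rw [Finset.mem_sdiff] at hp hq
        rcases lt_trichotomy p.1.1 q.1.1 with h | h | h
        · exact (hp.2 (hs p q hp.1 hq.1 h)).elim
        · apply Subtype.ext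
          refine Prod.ext h ?_
          rw [← (Finset.mem_filter.1 hp.1).2.2, ← (Finset.mem_filter.1 hq.1).2.2, h]
        · exact (hq.2 (hs q p hq.1 hp.1 h)).elim
      have h4 := Finset.le_card_sdiff (Q.image Prod.fst) S
      have h5 : (Q.image Prod.fst).card ≤ Q.card := Finset.card_image_le
      omega
    rw [h1]
    refine (Finset.sum_le_sum fun i _ => h2 i).trans ?_
    rw [Finset.sum_add_distrib]
    simp only [Finset.sum_const, Finset.card_univ, smul_eq_mul, mul_one]
    refine Nat.add_le_add_left ?_ _
    simp only [Finset.card_filter]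
    rw [Finset.sum_comm, Fintype.card_subtype, Finset.card_filter, Finset.mul_sum]
    apply Finset.sum_le_sum
    intro pq _
    rw [← Finset.card_filter]
    split_ifs with h
    · obtain ⟨j, hj⟩ := h
      rw [mul_one]
      refine le_trans (Finset.card_le_card ?_) (hm pq.1.1 pq.1.2 pq.2.1 pq.2.2 ?_)
      · intro i hi
        rw [Finset.mem_filter] at hi ⊢
        exact ⟨hi.1, hi.2.1, hi.2.2.1⟩
      · intro h
        have := hj.2.2.1
        rw [h] at this
        exact lt_irrefl _ this
    · push Not at h
      rw [Finset.filter_false_of_mem (fun i _ => h i)]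
      simp

end IncB

namespace IncB
open Filter Topology

lemma loc_unique {F Fy : ℝ → ℝ → ℝ} (hF : Continuous (fun p : ℝ × ℝ => F p.1 p.2))
    (hFy : Continuous (fun p : ℝ × ℝ => Fy p.1 p.2))
    (hd : ∀ x y, HasDerivAt (F x) (Fy x y) y) {x0 r : ℝ} (h0 : F x0 r = 0) (h1 : Fy x0 r ≠ 0) :
    ∀ᶠ ε in 𝓝[>] (0:ℝ), ∀ᶠ x in 𝓝 x0, ∃ y, |y - r| < ε ∧ F x y = 0 ∧
      ∀ y', |y' - r| < ε → F x y' = 0 → y' = y := by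
  have hop : IsOpen {p : ℝ × ℝ | Fy p.1 p.2 ≠ 0} := isOpen_ne.preimage hFy
  obtain ⟨δ, hδ, hball⟩ := Metric.isOpen_iff.1 hop (x0, r) h1
  have hne : ∀ x y, |x - x0| < δ → |y - r| < δ → Fy x y ≠ 0 := by
    intro x y hx hy
    have : (x, y) ∈ Metric.ball (x0, r) δ := by
      rw [Metric.mem_ball, Prod.dist_eq, Real.dist_eq, Real.dist_eq]
      exact max_lt hx hy
    exact hball this
  have hcF : ∀ x, Continuous (F x) := fun x =>
    continuous_iff_continuousAt.2 fun y => (hd x y).continuousAt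
  have hinj : ∀ x, |x - x0| < δ → ∀ y1 y2, |y1 - r| < δ → |y2 - r| < δ → y1 < y2 →
      F x y1 ≠ F x y2 := by
    intro x hx y1 y2 h1 h2 h12 he
    obtain ⟨c, hc, hc0⟩ := exists_hasDerivAt_eq_zero h12 (hcF x).continuousOn he
      (fun y _ => hd x y)
    refine hne x c hx ?_ hc0
    rw [abs_lt] at h1 h2 ⊢
    constructor <;> linarith [hc.1, hc.2]
  have hinj' : ∀ x, |x - x0| < δ → ∀ y1 y2, |y1 - r| < δ → |y2 - r| < δ →
      F x y1 = F x y2 → y1 = y2 := by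
    intro x hx y1 y2 h1 h2 he
    rcases lt_trichotomy y1 y2 with h | h | h
    · exact (hinj x hx y1 y2 h1 h2 h he).elim
    · exact h
    · exact (hinj x hx y2 y1 h2 h1 h he.symm).elim
  filter_upwards [Ioo_mem_nhdsGT hδ] with ε hε
  obtain ⟨hε0, hεδ⟩ := hε
  have hx0 : |x0 - x0| < δ := by simpa using hδ
  have hab : r - ε / 2 ≤ r + ε / 2 := by linarith
  have hnear : ∀ᶠ x in 𝓝 x0, |x - x0| < δ := by
    have := Metric.ball_mem_nhds x0 hδ
    filter_upwards [this] with x hx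
    rwa [Metric.mem_ball, Real.dist_eq] at hx
  have hcx : ∀ y, Continuous (fun x => F x y) := fun y =>
    hF.comp (continuous_id.prodMk continuous_const)
  have hio : Set.InjOn (F x0) (Set.Icc (r - ε/2) (r + ε/2)) := by
    intro y1 h1 y2 h2 he
    refine hinj' x0 hx0 y1 y2 ?_ ?_ he
    · rw [abs_lt]; constructor <;> linarith [h1.1, h1.2]
    · rw [abs_lt]; constructor <;> linarith [h2.1, h2.2]
  have hfin : ∀ x, |x - x0| < δ → (∃ y ∈ Set.Icc (r - ε/2) (r + ε/2), F x y = 0) →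
      ∃ y, |y - r| < ε ∧ F x y = 0 ∧ ∀ y', |y' - r| < ε → F x y' = 0 → y' = y := by
    rintro x hx ⟨y, hy, hy0⟩
    have hyr : |y - r| < ε := by rw [abs_lt]; constructor <;> linarith [hy.1, hy.2]
    exact ⟨y, hyr, hy0, fun y' h1 h2 => hinj' x hx y' y (h1.trans hεδ) (hyr.trans hεδ)
      (h2.trans hy0.symm)⟩
  have ml : r - ε/2 ∈ Set.Icc (r - ε/2) (r + ε/2) := ⟨le_rfl, hab⟩
  have mr : r + ε/2 ∈ Set.Icc (r - ε/2) (r + ε/2) := ⟨hab, le_rfl⟩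
  have mm : r ∈ Set.Icc (r - ε/2) (r + ε/2) := ⟨by linarith, by linarith⟩
  rcases ContinuousOn.strictMonoOn_of_injOn_Icc' hab (hcF x0).continuousOn hio with hm | hm
  · have a1 : F x0 (r - ε/2) < 0 := by rw [← h0]; exact hm ml mm (by linarith)
    have a2 : 0 < F x0 (r + ε/2) := by rw [← h0]; exact hm mm mr (by linarith)
    filter_upwards [hnear, (hcx (r - ε/2)).continuousAt.eventually_lt continuousAt_const a1,
      continuousAt_const.eventually_lt (hcx (r + ε/2)).continuousAt a2] with x hx b1 b2
    apply hfin x hx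
    obtain ⟨y, hy, hy0⟩ := intermediate_value_Icc hab (hcF x).continuousOn ⟨b1.le, b2.le⟩
    exact ⟨y, hy, hy0⟩
  · have a1 : 0 < F x0 (r - ε/2) := by rw [← h0]; exact hm ml mm (by linarith)
    have a2 : F x0 (r + ε/2) < 0 := by rw [← h0]; exact hm mm mr (by linarith)
    filter_upwards [hnear, continuousAt_const.eventually_lt (hcx (r - ε/2)).continuousAt a1,
      (hcx (r + ε/2)).continuousAt.eventually_lt continuousAt_const a2] with x hx b1 b2
    apply hfin x hx
    obtain ⟨y, hy, hy0⟩ := intermediate_value_Icc' hab (hcF x).continuousOn ⟨b2.le, b1.le⟩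
    exact ⟨y, hy, hy0⟩

lemma rank_transfer (A B : Finset ℝ) (ε : ℝ)
    (hsep : ∀ r ∈ A, ∀ r' ∈ A, r < r' → r + 2 * ε ≤ r')
    (h1 : ∀ r ∈ A, ∃ y ∈ B, |y - r| < ε ∧ ∀ y' ∈ B, |y' - r| < ε → y' = y)
    (h2 : ∀ y ∈ B, ∃ r ∈ A, |y - r| < ε) :
    B.card = A.card ∧ ∀ r ∈ A, ∃ y ∈ B, |y - r| < ε ∧
      (B.filter (· < y)).card = (A.filter (· < r)).card := by
  choose! φ hφB hφ hφu using h1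
  have hmono : ∀ r ∈ A, ∀ r' ∈ A, r < r' → φ r < φ r' := by
    intro r hr r' hr' h
    have := hsep r hr r' hr' h
    have a1 := abs_lt.1 (hφ r hr)
    have a2 := abs_lt.1 (hφ r' hr')
    linarith [a1.2, a2.1]
  have hinj : Set.InjOn φ A := by
    intro r hr r' hr' he
    rcases lt_trichotomy r r' with h | h | h
    · exact ((hmono r hr r' hr' h).ne he).elim
    · exact h
    · exact ((hmono r' hr' r hr h).ne he.symm).elim
  have himg : B = A.image φ := by
    ext y
    rw [Finset.mem_image]
    constructor
    · intro hy
      obtain ⟨r, hr, hyr⟩ := h2 y hy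
      exact ⟨r, hr, (hφu r hr y hy hyr).symm⟩
    · rintro ⟨r, hr, rfl⟩; exact hφB r hr
  refine ⟨by rw [himg, Finset.card_image_of_injOn hinj], fun r hr => ⟨φ r, hφB r hr, hφ r hr, ?_⟩⟩
  have : B.filter (· < φ r) = (A.filter (· < r)).image φ := by
    ext y
    rw [himg]
    simp only [Finset.mem_filter, Finset.mem_image]
    constructor
    · rintro ⟨⟨r', hr', rfl⟩, h⟩
      refine ⟨r', ⟨hr', ?_⟩, rfl⟩
      by_contra hc
      push Not at hc
      rcases hc.lt_or_eq with h3 | h3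
      · exact lt_asymm h (hmono r hr r' hr' h3)
      · subst h3; exact lt_irrefl _ h
    · rintro ⟨r', ⟨hr', h⟩, rfl⟩
      exact ⟨⟨r', hr', rfl⟩, hmono r' hr' r hr h⟩
  rw [this, Finset.card_image_of_injOn (hinj.mono (fun x hx => (Finset.mem_filter.1 hx).1))]

lemma rank_lt {A : Finset ℝ} {y y' : ℝ} (hy : y ∈ A) (h : y < y') :
    (A.filter (· < y)).card < (A.filter (· < y')).card := by
  apply Finset.card_lt_card
  rw [Finset.ssubset_iff_of_subset]
  · exact ⟨y, Finset.mem_filter.2 ⟨hy, h⟩, by simp⟩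
  · intro z hz
    rw [Finset.mem_filter] at hz ⊢
    exact ⟨hz.1, hz.2.trans h⟩

lemma rank_inj {A : Finset ℝ} {y y' : ℝ} (hy : y ∈ A) (hy' : y' ∈ A)
    (h : (A.filter (· < y)).card = (A.filter (· < y')).card) : y = y' := by
  rcases lt_trichotomy y y' with h1 | h1 | h1
  · have := rank_lt hy h1; omega
  · exact h1
  · have := rank_lt hy' h1; omega

lemma rank_lt_card {A : Finset ℝ} {y : ℝ} (hy : y ∈ A) : (A.filter (· < y)).card < A.card := by
  apply Finset.card_lt_card
  rw [Finset.ssubset_iff_of_subset (Finset.filter_subset _ _)]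
  exact ⟨y, hy, by simp⟩

lemma rank_surj {A : Finset ℝ} {j : ℕ} (hj : j < A.card) :
    ∃ y ∈ A, (A.filter (· < y)).card = j := by
  have h1 : A.image (fun y => (A.filter (· < y)).card) = Finset.range A.card := by
    apply Finset.eq_of_subset_of_card_le
    · intro k hk
      obtain ⟨y, hy, rfl⟩ := Finset.mem_image.1 hk
      exact Finset.mem_range.2 (rank_lt_card hy)
    · rw [Finset.card_range, Finset.card_image_of_injOn]
      intro y hy y' hy' h
      exact rank_inj hy hy' h
  have h2 : j ∈ A.image (fun y => (A.filter (· < y)).card) := h1 ▸ Finset.mem_range.2 hj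
  exact Finset.mem_image.1 h2

lemma loc_iso {F Fy : ℝ → ℝ → ℝ} (hF : Continuous (fun p : ℝ × ℝ => F p.1 p.2))
    (hFy : Continuous (fun p : ℝ × ℝ => Fy p.1 p.2))
    (hd : ∀ x y, HasDerivAt (F x) (Fy x y) y) (R : ℝ → Finset ℝ) {x0 : ℝ}
    (hR : ∀ᶠ x in 𝓝 x0, ∀ y, y ∈ R x ↔ F x y = 0)
    (hs : ∀ y, F x0 y = 0 → Fy x0 y ≠ 0)
    (hb : ∃ b, ∀ᶠ x in 𝓝 x0, ∀ y, F x y = 0 → |y| ≤ b) :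
    ∀ᶠ ε in 𝓝[>] (0:ℝ), ∀ᶠ x in 𝓝 x0, (R x).card = (R x0).card ∧
      ∀ r ∈ R x0, ∃ y ∈ R x, |y - r| < ε ∧
        ((R x).filter (· < y)).card = ((R x0).filter (· < r)).card := by
  have hR0 := hR.self_of_nhds
  have e1 : ∀ᶠ ε in 𝓝[>] (0:ℝ), ∀ r ∈ R x0, ∀ᶠ x in 𝓝 x0, ∃ y, |y - r| < ε ∧ F x y = 0 ∧
      ∀ y', |y' - r| < ε → F x y' = 0 → y' = y := by
    rw [Finset.eventually_all]
    intro r hr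
    have h0 := (hR0 r).1 hr
    exact loc_unique hF hFy hd h0 (hs r h0)
  have e2 : ∀ᶠ ε in 𝓝[>] (0:ℝ), ∀ r ∈ R x0, ∀ r' ∈ R x0, r < r' → r + 2 * ε ≤ r' := by
    rw [Finset.eventually_all]
    intro r _
    rw [Finset.eventually_all]
    intro r' _
    by_cases h : r < r'
    · filter_upwards [Ioo_mem_nhdsGT (show (0:ℝ) < (r' - r) / 2 by linarith)] with ε hε _
      linarith [hε.2]
    · exact Eventually.of_forall fun _ h' => (h h').elim
  filter_upwards [e1, e2, self_mem_nhdsWithin] with ε h1 h2 hε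
  have hε : 0 < ε := hε
  have h1' : ∀ᶠ x in 𝓝 x0, ∀ r ∈ R x0, ∃ y, |y - r| < ε ∧ F x y = 0 ∧
      ∀ y', |y' - r| < ε → F x y' = 0 → y' = y := by
    rw [Finset.eventually_all]; exact h1
  obtain ⟨b, hb⟩ := hb
  let K : Set ℝ := Set.Icc (-b) b ∩ ⋂ r ∈ R x0, {y | ε ≤ |y - r|}
  have hK : IsCompact K := by
    apply isCompact_Icc.inter_right
    apply isClosed_biInter
    intro r _
    exact isClosed_le continuous_const (by fun_prop)
  have h3 : ∀ᶠ x in 𝓝 x0, ∀ y ∈ K, F x y ≠ 0 := by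
    apply hK.eventually_forall_of_forall_eventually
    intro y hy
    have hy0 : F x0 y ≠ 0 := by
      intro h
      have hr := (hR0 y).2 h
      have := Set.mem_iInter₂.1 hy.2 y hr
      simp only [Set.mem_ofPred_eq, sub_self, abs_zero] at this
      linarith
    exact hF.continuousAt.eventually_ne hy0
  filter_upwards [hR, h1', h3, hb] with x hx g1 g3 g4
  apply rank_transfer (R x0) (R x) ε h2
  · intro r hr
    obtain ⟨y, a1, a2, a3⟩ := g1 r hr
    exact ⟨y, (hx y).2 a2, a1, fun y' hy' h => a3 y' h ((hx y').1 hy')⟩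
  · intro y hy
    by_contra hc
    push Not at hc
    have hy0 := (hx y).1 hy
    refine g3 y ⟨abs_le.1 (g4 y hy0), ?_⟩ hy0
    rw [Set.mem_iInter₂]
    exact fun r hr => hc r hr

/-- The `j`-th smallest element of the finite set `A`. -/
noncomputable def nth (A : Finset ℝ) (j : ℕ) : ℝ :=
  open scoped Classical in
  if h : ∃ y ∈ A, (A.filter (· < y)).card = j then h.choose else 0

lemma nth_eq {A : Finset ℝ} {y : ℝ} (hy : y ∈ A) : nth A (A.filter (· < y)).card = y := by
  have h : ∃ y' ∈ A, (A.filter (· < y')).card = (A.filter (· < y)).card := ⟨y, hy, rfl⟩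
  unfold nth
  rw [dif_pos h]
  exact rank_inj h.choose_spec.1 hy h.choose_spec.2

lemma nth_mem {A : Finset ℝ} {j : ℕ} (hj : j < A.card) :
    nth A j ∈ A ∧ (A.filter (· < nth A j)).card = j := by
  obtain ⟨y, hy, rfl⟩ := rank_surj hj
  rw [nth_eq hy]
  exact ⟨hy, rfl⟩

/-- The domain of the arc with index `(i, j)`. -/
def dom (B : Finset ℝ) (R : ℝ → Finset ℝ) (i j : ℕ) : Set ℝ :=
  {x | x ∉ B ∧ (B.filter (· < x)).card = i ∧ j < (R x).card}

theorem family {F Fy : ℝ → ℝ → ℝ} (hF : Continuous (fun p : ℝ × ℝ => F p.1 p.2))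
    (hFy : Continuous (fun p : ℝ × ℝ => Fy p.1 p.2))
    (hd : ∀ x y, HasDerivAt (F x) (Fy x y) y) (R : ℝ → Finset ℝ) (B : Finset ℝ)
    (hR : ∀ x ∉ B, ∀ y, y ∈ R x ↔ F x y = 0)
    (hs : ∀ x ∉ B, ∀ y, F x y = 0 → Fy x y ≠ 0)
    (hb : ∀ x0 ∉ B, ∃ b, ∀ᶠ x in 𝓝 x0, ∀ y, F x y = 0 → |y| ≤ b) (i j : ℕ) :
    (dom B R i j).OrdConnected ∧ ContinuousOn (fun x => nth (R x) j) (dom B R i j) := by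
  have hopen : ∀ x0 ∉ B, ∀ᶠ x in 𝓝 x0, x ∉ B := fun x0 h =>
    B.finite_toSet.isClosed.isOpen_compl.mem_nhds h
  have hiso := fun x0 (h : x0 ∉ B) => loc_iso hF hFy hd R
    ((hopen x0 h).mono fun x hx => hR x hx) (hs x0 h) (hb x0 h)
  constructor
  · refine ⟨fun x hx y hy z hz => ?_⟩
    have hin : ∀ w ∈ Set.Icc x y, w ∉ B ∧ (B.filter (· < w)).card = i := by
      intro w hw
      have s1 : B.filter (· < x) ⊆ B.filter (· < w) := by
        intro u hu
        rw [Finset.mem_filter] at hu ⊢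
        exact ⟨hu.1, hu.2.trans_le hw.1⟩
      have s2 : B.filter (· < w) ⊆ B.filter (· < y) := by
        intro u hu
        rw [Finset.mem_filter] at hu ⊢
        exact ⟨hu.1, hu.2.trans_le hw.2⟩
      have c1 := Finset.card_le_card s1
      have c2 := Finset.card_le_card s2
      have d1 := hx.2.1
      have d2 := hy.2.1
      refine ⟨fun hwB => ?_, by omega⟩
      have hwy : w < y := lt_of_le_of_ne hw.2 (by rintro rfl; exact hy.1 hwB)
      have := rank_lt hwB hwy
      omega
    have hc : ContinuousOn (fun w => (R w).card) (Set.Icc x y) := by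
      intro w hw
      apply ContinuousAt.continuousWithinAt
      obtain ⟨ε, hε⟩ := (hiso w (hin w hw).1).exists
      have : (fun w => (R w).card) =ᶠ[𝓝 w] fun _ => (R w).card := hε.mono fun _ h => h.1
      exact continuousAt_const.congr this.symm
    have hxy : x ≤ y := hz.1.trans hz.2
    have := isPreconnected_Icc.constant hc (Set.left_mem_Icc.2 hxy) hz
    exact ⟨(hin z hz).1, (hin z hz).2, by rw [← this]; exact hx.2.2⟩
  · intro x0 hx0
    apply ContinuousAt.continuousWithinAt
    rw [Metric.continuousAt_iff']
    intro ε hε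
    obtain ⟨ε', h1, h2⟩ := ((hiso x0 hx0.1).and (Ioo_mem_nhdsGT hε)).exists
    filter_upwards [h1] with x hx
    obtain ⟨m1, m2⟩ := nth_mem hx0.2.2
    obtain ⟨y, hy, hyr, hrk⟩ := hx.2 _ m1
    rw [m2] at hrk
    have : nth (R x) j = y := by rw [← hrk]; exact nth_eq hy
    rw [this, Real.dist_eq]
    exact hyr.trans h2.2

end IncB

namespace IncB
open Filter Topology Polynomial

/-- The specialization of a bivariate polynomial at `x`. -/
noncomputable def sp (f : ℝ[X][X]) (x : ℝ) : ℝ[X] := f.map (evalRingHom x)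

lemma sp_eval (f : ℝ[X][X]) (x y : ℝ) :
    (sp f x).eval y = ∑ k ∈ Finset.range (f.natDegree + 1), (f.coeff k).eval x * y ^ k := by
  unfold sp
  rw [eval_map, eval₂_eq_sum_range]
  rfl

lemma sp_cont (f : ℝ[X][X]) : Continuous (fun p : ℝ × ℝ => (sp f p.1).eval p.2) := by
  simp only [sp_eval]
  fun_prop

lemma sp_deriv (f : ℝ[X][X]) (x y : ℝ) :
    HasDerivAt (fun y => (sp f x).eval y) ((sp (derivative f) x).eval y) y := by
  have := (sp f x).hasDerivAt y
  unfold sp at this ⊢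
  rwa [derivative_map] at this

lemma sp_natDegree {f : ℝ[X][X]} {x : ℝ} (h : f.leadingCoeff.eval x ≠ 0) :
    (sp f x).natDegree = f.natDegree :=
  natDegree_map_of_leadingCoeff_ne_zero _ h

lemma sp_bound {f : ℝ[X][X]} {x : ℝ} (h : f.leadingCoeff.eval x ≠ 0) {y : ℝ}
    (hy : (sp f x).eval y = 0) : |y| ≤
      (∑ k ∈ Finset.range f.natDegree, |(f.coeff k).eval x|) / |f.leadingCoeff.eval x| + 1 := by
  have hlc : (sp f x).leadingCoeff = f.leadingCoeff.eval x :=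
    leadingCoeff_map_of_leadingCoeff_ne_zero _ h
  have h0 : sp f x ≠ 0 := by
    rw [← leadingCoeff_ne_zero, hlc]; exact h
  have := (IsRoot.norm_lt_cauchyBound h0 (show (sp f x).IsRoot y from hy)).le
  have h2 : ((‖y‖₊ : NNReal) : ℝ) ≤ (cauchyBound (sp f x) : ℝ) := by exact_mod_cast this
  rw [coe_nnnorm, Real.norm_eq_abs] at h2
  refine h2.trans ?_
  unfold cauchyBound
  rw [hlc, sp_natDegree h]
  push_cast
  rw [Real.norm_eq_abs]
  gcongr
  have h3 : (Finset.range f.natDegree).sup (fun k => ‖(sp f x).coeff k‖₊) ≤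
      ∑ k ∈ Finset.range f.natDegree, ‖(sp f x).coeff k‖₊ := by
    apply Finset.sup_le
    intro k hk
    exact Finset.single_le_sum (f := fun k => ‖(sp f x).coeff k‖₊) (fun _ _ => zero_le) hk
  have h4 : (((Finset.range f.natDegree).sup (fun k => ‖(sp f x).coeff k‖₊) : NNReal) : ℝ) ≤
      ((∑ k ∈ Finset.range f.natDegree, ‖(sp f x).coeff k‖₊ : NNReal) : ℝ) := by exact_mod_cast h3
  refine h4.trans ?_
  push_cast
  apply le_of_eq
  apply Finset.sum_congr rfl
  intro k _
  simp [sp, coeff_map]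

lemma det_natDegree {n : ℕ} (A : Matrix (Fin n) (Fin n) ℝ[X]) (d : ℕ)
    (h : ∀ i j, (A i j).natDegree ≤ d) : A.det.natDegree ≤ n * d := by
  rw [Matrix.det_apply]
  apply natDegree_sum_le_of_forall_le
  intro σ _
  have h1 : (∏ i, A (σ i) i).natDegree ≤ n * d := by
    refine (natDegree_prod_le _ _).trans ?_
    refine (Finset.sum_le_card_nsmul _ _ d (fun i _ => h _ _)).trans ?_
    simp
  rcases Int.units_eq_one_or (Equiv.Perm.sign σ) with hs | hs <;> rw [hs]
  · simpa using h1
  · simpa using h1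

lemma resultant_natDegree (f g : ℝ[X][X]) (m n d : ℕ) (hf : ∀ k, (f.coeff k).natDegree ≤ d)
    (hg : ∀ k, (g.coeff k).natDegree ≤ d) : (resultant f g m n).natDegree ≤ (m + n) * d := by
  apply det_natDegree
  intro i j
  unfold sylvester
  rw [Matrix.of_apply]
  refine j.addCases (fun j => ?_) (fun j => ?_)
  · rw [Fin.addCases_left]; split_ifs
    · exact hg _
    · simp
  · rw [Fin.addCases_right]; split_ifs
    · exact hf _
    · simp

/-- The polynomial cutting out the bad abscissae. -/
noncomputable def badPoly (f : ℝ[X][X]) : ℝ[X] := f.leadingCoeff * resultant f (derivative f)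

lemma badPoly_ne {f : ℝ[X][X]} (hf : Irreducible f) (h0 : f.natDegree ≠ 0) : badPoly f ≠ 0 := by
  unfold badPoly
  apply mul_ne_zero
  · rw [leadingCoeff_ne_zero]; exact hf.ne_zero
  · let K := FractionRing ℝ[X]
    have hprim := hf.isPrimitive h0
    have hi : Irreducible (f.map (algebraMap ℝ[X] K)) :=
      (hprim.irreducible_iff_irreducible_map_fraction_map).1 hf
    have hinj : Function.Injective (algebraMap ℝ[X] K) := IsFractionRing.injective _ _
    have : CharZero K := charZero_of_injective_algebraMap hinj
    have hsep := hi.separable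
    have := resultant_ne_zero _ _ hsep
    rw [derivative_map, natDegree_map_eq_of_injective hinj, natDegree_map_eq_of_injective hinj,
      resultant_map_map] at this
    intro h
    rw [h, map_zero] at this
    exact this rfl

lemma badPoly_deg {f : ℝ[X][X]} {d : ℕ} (hd : f.natDegree ≤ d)
    (hc : ∀ k, (f.coeff k).natDegree ≤ d) : (badPoly f).natDegree ≤ d + 2 * d * d := by
  unfold badPoly
  refine natDegree_mul_le.trans (Nat.add_le_add (hc _) ?_)
  refine (resultant_natDegree f (derivative f) _ _ d hc ?_).trans ?_
  · intro k
    rw [coeff_derivative]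
    refine natDegree_mul_le.trans ?_
    have : ((k : ℝ[X]) + 1).natDegree = 0 := by
      have : ((k : ℝ[X]) + 1) = ((k + 1 : ℕ) : ℝ[X]) := by push_cast; rfl
      rw [this]; exact natDegree_natCast _
    rw [this]; exact hc _
  · have := natDegree_derivative_le f
    exact Nat.mul_le_mul_right _ (by omega)

lemma badPoly_simple {f : ℝ[X][X]} (h0 : f.natDegree ≠ 0) {x y : ℝ}
    (hx : (badPoly f).eval x ≠ 0) (hy : (sp f x).eval y = 0) :
    (sp (derivative f) x).eval y ≠ 0 := by
  intro hy'
  apply hx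
  obtain ⟨p, q, -, -, h⟩ := exists_mul_add_mul_eq_C_resultant f (derivative f) le_rfl le_rfl
    (Or.inl h0)
  have := congrArg (fun r => (sp r x).eval y) h
  simp only [sp, Polynomial.map_add, Polynomial.map_mul, eval_add, eval_mul, map_C, eval_C] at this
  unfold sp at hy hy'
  rw [hy, hy'] at this
  simp only [zero_mul, zero_add, coe_evalRingHom] at this
  unfold badPoly
  rw [eval_mul, ← this, mul_zero]

lemma sp_ne_zero {f : ℝ[X][X]} (hf : Irreducible f) (h0 : f.natDegree ≠ 0) (x : ℝ) :
    sp f x ≠ 0 := by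
  intro h
  have h1 : C (X - C x) ∣ f := by
    rw [C_dvd_iff_dvd_coeff]
    intro k
    rw [dvd_iff_isRoot]
    have := congrArg (fun p => p.coeff k) h
    simpa [sp, coeff_map] using this
  exact not_isUnit_X_sub_C x (hf.isPrimitive h0 _ h1)

theorem curve_arcs (d : ℕ) (f : ℝ[X][X]) (hf : Irreducible f) (h0 : f.natDegree ≠ 0)
    (hd : f.natDegree ≤ d) (hc : ∀ k, (f.coeff k).natDegree ≤ d) :
    ∃ (J : Fin (d + 2 * d * d + 1) × Fin d → Set ℝ)
      (g : Fin (d + 2 * d * d + 1) × Fin d → ℝ → ℝ) (Ex : Finset (ℝ × ℝ)),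
      (∀ k, (J k).OrdConnected) ∧ (∀ k, ContinuousOn (g k) (J k)) ∧
      (∀ k p, On (J k) (g k) p → (sp f p.1).eval p.2 = 0) ∧
      (∀ k k' p, On (J k) (g k) p → On (J k') (g k') p → k = k') ∧
      Ex.card ≤ (d + 2 * d * d) * d ∧
      ∀ p : ℝ × ℝ, (sp f p.1).eval p.2 = 0 → p ∈ Ex ∨ ∃ k, On (J k) (g k) p := by
  let B : Finset ℝ := (badPoly f).roots.toFinset
  have hB0 := badPoly_ne hf h0
  have hB : ∀ x, x ∉ B ↔ (badPoly f).eval x ≠ 0 := by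
    intro x
    simp [B, hB0]
  have hBc : B.card ≤ d + 2 * d * d :=
    (Multiset.toFinset_card_le _).trans ((card_roots' _).trans (badPoly_deg hd hc))
  let R : ℝ → Finset ℝ := fun x => (sp f x).roots.toFinset
  have hR : ∀ x y, y ∈ R x ↔ (sp f x).eval y = 0 := by
    intro x y
    simp [R, sp_ne_zero hf h0 x]
  have hRc : ∀ x, (R x).card ≤ d := by
    intro x
    refine (Multiset.toFinset_card_le _).trans ((card_roots' _).trans (le_trans ?_ hd))
    exact natDegree_map_le
  have hlc : ∀ x, x ∉ B → f.leadingCoeff.eval x ≠ 0 := by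
    intro x hx h
    rw [hB] at hx
    apply hx
    unfold badPoly
    rw [eval_mul, h, zero_mul]
  have hbd : ∀ x0 ∉ B, ∃ b, ∀ᶠ x in 𝓝 x0, ∀ y, (sp f x).eval y = 0 → |y| ≤ b := by
    intro x0 hx0
    have hl := hlc x0 hx0
    let β : ℝ → ℝ := fun x =>
      (∑ k ∈ Finset.range f.natDegree, |(f.coeff k).eval x|) / |f.leadingCoeff.eval x| + 1
    have hβ : ContinuousAt β x0 := by
      apply ContinuousAt.add _ continuousAt_const
      apply ContinuousAt.div
      · fun_prop
      · fun_prop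
      · simpa using hl
    refine ⟨β x0 + 1, ?_⟩
    have e1 : ∀ᶠ x in 𝓝 x0, β x < β x0 + 1 :=
      hβ.eventually_lt continuousAt_const (by linarith)
    have e2 : ∀ᶠ x in 𝓝 x0, f.leadingCoeff.eval x ≠ 0 :=
      (f.leadingCoeff.continuous.continuousAt).eventually_ne hl
    filter_upwards [e1, e2] with x h1 h2 y hy
    exact (sp_bound h2 hy).trans h1.le
  have hfam := fun i j => family (sp_cont f) (sp_cont (derivative f)) (sp_deriv f) R B
    (fun x _ => hR x) (fun x hx y hy => badPoly_simple h0 ((hB x).1 hx) hy) hbd i j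
  refine ⟨fun k => dom B R k.1 k.2, fun k x => nth (R x) k.2,
    B.biUnion (fun x => (R x).image (fun y => (x, y))), fun k => (hfam _ _).1,
    fun k => (hfam _ _).2, ?_, ?_, ?_, ?_⟩
  · rintro k p ⟨h1, h2⟩
    rw [← hR, ← h2]
    exact (nth_mem h1.2.2).1
  · rintro ⟨i, j⟩ ⟨i', j'⟩ p ⟨h1, h2⟩ ⟨h3, h4⟩
    have e1 : i = i' := Fin.ext (h1.2.1.symm.trans h3.2.1)
    have e2 : j = j' := by
      apply Fin.ext
      have a := (nth_mem h1.2.2).2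
      have b := (nth_mem h3.2.2).2
      simp only at h2 h4 a b
      rw [h2] at a
      rw [h4] at b
      omega
    rw [e1, e2]
  · refine Finset.card_biUnion_le.trans ?_
    refine (Finset.sum_le_card_nsmul _ _ d (fun x _ => Finset.card_image_le.trans (hRc x))).trans ?_
    rw [smul_eq_mul]
    exact Nat.mul_le_mul_right _ hBc
  · intro p hp
    have hy := (hR p.1 p.2).2 hp
    by_cases hx : p.1 ∈ B
    · left
      exact Finset.mem_biUnion.2 ⟨p.1, hx, Finset.mem_image.2 ⟨p.2, hy, rfl⟩⟩
    · right
      have hi : (B.filter (· < p.1)).card ≤ B.card := Finset.card_filter_le _ _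
      have hj := rank_lt_card hy
      refine ⟨(⟨(B.filter (· < p.1)).card, by omega⟩,
        ⟨((R p.1).filter (· < p.2)).card, hj.trans_le (hRc _)⟩), ⟨hx, rfl, hj⟩, nth_eq hy⟩

end IncB

namespace IncB
open Polynomial

/-- A plane real polynomial as a polynomial in `y` with coefficients in `ℝ[x]`. -/
noncomputable def biv (f : MvPolynomial (Fin 2) ℝ) : ℝ[X][X] := (Polynomial.Bivariate.equivMvPolynomial ℝ).symm f

lemma biv_eval (f : MvPolynomial (Fin 2) ℝ) (x y : ℝ) :
    (sp (biv f) x).eval y = MvPolynomial.eval ![x, y] f := by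
  unfold biv sp
  induction f using MvPolynomial.induction_on with
  | C a => simp
  | add p q hp hq => simp only [map_add, Polynomial.map_add, eval_add, hp, hq]
  | mul_X p i hp =>
    simp only [map_mul, Polynomial.map_mul, eval_mul, hp]
    congr 1
    fin_cases i
    · simp
    · simp

lemma biv_irr {f : MvPolynomial (Fin 2) ℝ} (hf : Irreducible f) : Irreducible (biv f) :=
  (MulEquiv.irreducible_iff (Polynomial.Bivariate.equivMvPolynomial ℝ).symm.toMulEquiv).2 hf

lemma biv_deg {f : MvPolynomial (Fin 2) ℝ} {d : ℕ} (hd : f.totalDegree ≤ d) :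
    (biv f).natDegree ≤ d ∧ ∀ k, ((biv f).coeff k).natDegree ≤ d := by
  have hs : ∀ s ∈ f.support, ∀ i, s i ≤ d := fun s h i =>
    (MvPolynomial.monomial_le_degreeOf i h).trans
      ((MvPolynomial.degreeOf_le_totalDegree f i).trans hd)
  have hb : biv f = ∑ s ∈ f.support, C (C (f.coeff s) * X ^ (s 0)) * X ^ (s 1) := by
    unfold biv
    conv_lhs => rw [f.as_sum]
    rw [map_sum]
    apply Finset.sum_congr rfl
    intro s _
    rw [MvPolynomial.monomial_eq, map_mul, Finsupp.prod_fintype _ _ (by simp)]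
    simp [mul_assoc]
  constructor
  · rw [hb]
    apply natDegree_sum_le_of_forall_le
    intro s h
    exact (natDegree_C_mul_X_pow_le _ _).trans (hs s h 1)
  · intro k
    rw [hb, finsetSum_coeff]
    apply natDegree_sum_le_of_forall_le
    intro s h
    rw [coeff_C_mul_X_pow]
    split_ifs
    · exact (natDegree_C_mul_X_pow_le _ _).trans (hs s h 0)
    · simp

open scoped Classical in
theorem count (d M : ℕ) (P : Finset (ℝ × ℝ)) (Γ : Finset (Set (ℝ × ℝ)))
    (h1 : ∀ γ ∈ Γ, ∃ f : MvPolynomial (Fin 2) ℝ, Irreducible f ∧ f.totalDegree ≤ d ∧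
          γ = {p : ℝ × ℝ | MvPolynomial.eval ![p.1, p.2] f = 0})
    (h2 : ∀ γ ∈ Γ, ∀ γ' ∈ Γ, γ ≠ γ' → (γ ∩ γ').Finite ∧ (γ ∩ γ').ncard ≤ M)
    (h3 : ∀ p ∈ P, ∀ q ∈ P, p ≠ q → (Γ.filter (fun γ => p ∈ γ ∧ q ∈ γ)).card ≤ M) :
    ∃ X : ℕ, (X ≤ 6 * P.card ∨
      X ^ 3 ≤ 288 * ((Γ.card * ((d + 2 * d * d + 1) * d)) ^ 2 * M) * P.card ^ 2) ∧
      ∑ p ∈ P, (Γ.filter (fun γ => p ∈ γ)).card ≤ P.card + Γ.card * ((d + 2 * d * d) * d) +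
        (Γ.card * ((d + 2 * d * d + 1) * d) + M * X) := by
  let vert : Set (ℝ × ℝ) → Prop := fun γ => ∀ x y y' : ℝ, (x, y) ∈ γ → (x, y') ∈ γ
  let ι0 := {γ // γ ∈ Γ ∧ ¬ vert γ}
  have : Fintype ι0 := Fintype.subtype (Γ.filter fun γ => ¬ vert γ) (by simp)
  have hι0 : Fintype.card ι0 ≤ Γ.card := by
    rw [Fintype.card_of_subtype (Γ.filter fun γ => ¬ vert γ) (by simp)]
    exact Finset.card_filter_le _ _
  let κ := Fin (d + 2 * d * d + 1) × Fin d
  have hdata : ∀ γ : ι0, ∃ (J : κ → Set ℝ) (g : κ → ℝ → ℝ) (Ex : Finset (ℝ × ℝ)),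
      (∀ k, (J k).OrdConnected) ∧ (∀ k, ContinuousOn (g k) (J k)) ∧
      (∀ k p, On (J k) (g k) p → p ∈ γ.1) ∧
      (∀ k k' p, On (J k) (g k) p → On (J k') (g k') p → k = k') ∧
      Ex.card ≤ (d + 2 * d * d) * d ∧
      ∀ p : ℝ × ℝ, p ∈ γ.1 → p ∈ Ex ∨ ∃ k, On (J k) (g k) p := by
    rintro ⟨γ, hγ, hv⟩
    obtain ⟨f, hf, hdeg, rfl⟩ := h1 γ hγ
    obtain ⟨d1, d2⟩ := biv_deg hdeg
    have h0 : (biv f).natDegree ≠ 0 := by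
      intro h0
      apply hv
      intro x y y' hxy
      change MvPolynomial.eval ![x, y] f = 0 at hxy
      change MvPolynomial.eval ![x, y'] f = 0
      rw [← biv_eval] at hxy ⊢
      rw [eq_C_of_natDegree_eq_zero h0] at hxy ⊢
      simpa [sp] using hxy
    have := curve_arcs d (biv f) (biv_irr hf) h0 d1 d2
    simp only [biv_eval] at this
    exact this
  choose J g Ex hJ hg hon hdis hEx hcov using hdata
  have hpair : ∀ i j : ι0 × κ, i ≠ j →
      {x | x ∈ J i.1 i.2 ∧ x ∈ J j.1 j.2 ∧ g i.1 i.2 x = g j.1 j.2 x}.Finite ∧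
      {x | x ∈ J i.1 i.2 ∧ x ∈ J j.1 j.2 ∧ g i.1 i.2 x = g j.1 j.2 x}.ncard ≤ M := by
    rintro ⟨γ, k⟩ ⟨γ', k'⟩ hne
    by_cases hγ : γ = γ'
    · subst hγ
      have : {x | x ∈ J γ k ∧ x ∈ J γ k' ∧ g γ k x = g γ k' x} = ∅ := by
        ext x
        constructor
        · rintro ⟨a1, a2, a3⟩
          apply hne
          rw [hdis γ k k' (x, g γ k x) ⟨a1, rfl⟩ ⟨a2, a3.symm⟩]
        · intro h; exact h.elim
      simp only
      rw [this]
      simp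
    · obtain ⟨f1, f2⟩ := h2 γ.1 γ.2.1 γ'.1 γ'.2.1 (fun h => hγ (Subtype.ext h))
      have hmap : ∀ x ∈ {x | x ∈ J γ k ∧ x ∈ J γ' k' ∧ g γ k x = g γ' k' x},
          (x, g γ k x) ∈ γ.1 ∩ γ'.1 := by
        rintro x ⟨a1, a2, a3⟩
        exact ⟨hon γ k _ ⟨a1, rfl⟩, hon γ' k' _ ⟨a2, a3.symm⟩⟩
      have hinj : Set.InjOn (fun x => (x, g γ k x))
          {x | x ∈ J γ k ∧ x ∈ J γ' k' ∧ g γ k x = g γ' k' x} := by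
        intro x _ y _ h
        exact congrArg Prod.fst h
      exact ⟨Set.Finite.of_injOn hmap hinj f1,
        (Set.ncard_le_ncard_of_injOn _ hmap hinj f1).trans f2⟩
  have hpts : ∀ p ∈ P, ∀ q ∈ P, p ≠ q →
      (Finset.univ.filter fun i : ι0 × κ => On (J i.1 i.2) (g i.1 i.2) p ∧
        On (J i.1 i.2) (g i.1 i.2) q).card ≤ M := by
    intro p hp q hq hpq
    refine le_trans ?_ (h3 p hp q hq hpq)
    apply Finset.card_le_card_of_injOn (fun i => i.1.1)
    · rintro ⟨γ, k⟩ hi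
      obtain ⟨-, a, b⟩ := Finset.mem_filter.1 hi
      exact Finset.mem_filter.2 ⟨γ.2.1, hon γ k p a, hon γ k q b⟩
    · rintro ⟨γ, k⟩ hi ⟨γ', k'⟩ hi' he
      obtain ⟨-, a, -⟩ := Finset.mem_filter.1 hi
      obtain ⟨-, a', -⟩ := Finset.mem_filter.1 hi'
      have : γ = γ' := Subtype.ext he
      subst this
      rw [hdis γ k k' p a a']
  obtain ⟨X, hX1, hX2⟩ := arcs P (fun i : ι0 × κ => J i.1 i.2) (fun i => g i.1 i.2)
    (fun i => hJ i.1 i.2) (fun i => hg i.1 i.2) M M hpair hpts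
  have hcι : Fintype.card (ι0 × κ) ≤ Γ.card * ((d + 2 * d * d + 1) * d) := by
    rw [Fintype.card_prod, Fintype.card_prod, Fintype.card_fin, Fintype.card_fin]
    exact Nat.mul_le_mul_right _ hι0
  refine ⟨X, hX1.imp id (fun h => h.trans (by gcongr)), ?_⟩
  have hp : ∀ p ∈ P, (Γ.filter (fun γ => p ∈ γ)).card ≤ 1 +
      (Finset.univ.filter fun γ : ι0 => p ∈ Ex γ).card +
      (Finset.univ.filter fun i : ι0 × κ => On (J i.1 i.2) (g i.1 i.2) p).card := by
    intro p _
    have hsub : Γ.filter (fun γ => p ∈ γ) ⊆ (Γ.filter (fun γ => p ∈ γ ∧ vert γ)) ∪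
        ((Finset.univ.filter fun γ : ι0 => p ∈ Ex γ).image Subtype.val) ∪
        ((Finset.univ.filter fun i : ι0 × κ =>
          On (J i.1 i.2) (g i.1 i.2) p).image (fun i => i.1.1)) := by
      intro γ hγ
      rw [Finset.mem_filter] at hγ
      by_cases hv : vert γ
      · exact Finset.mem_union_left _ (Finset.mem_union_left _
          (Finset.mem_filter.2 ⟨hγ.1, hγ.2, hv⟩))
      · rcases hcov ⟨γ, hγ.1, hv⟩ p hγ.2 with h | ⟨k, hk⟩
        · exact Finset.mem_union_left _ (Finset.mem_union_right _
            (Finset.mem_image.2 ⟨⟨γ, hγ.1, hv⟩, Finset.mem_filter.2 ⟨Finset.mem_univ _, h⟩, rfl⟩))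
        · exact Finset.mem_union_right _ (Finset.mem_image.2 ⟨(⟨γ, hγ.1, hv⟩, k),
            Finset.mem_filter.2 ⟨Finset.mem_univ _, hk⟩, rfl⟩)
    refine (Finset.card_le_card hsub).trans ?_
    refine (Finset.card_union_le _ _).trans (Nat.add_le_add ?_ Finset.card_image_le)
    refine (Finset.card_union_le _ _).trans (Nat.add_le_add ?_ Finset.card_image_le)
    rw [Finset.card_le_one]
    intro γ hγ γ' hγ'
    rw [Finset.mem_filter] at hγ hγ'
    by_contra hne
    have hfin := (h2 γ hγ.1 γ' hγ'.1 hne).1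
    have hmaps : Set.MapsTo (fun y : ℝ => (p.1, y)) Set.univ (γ ∩ γ') := fun y _ =>
      ⟨hγ.2.2 p.1 p.2 y hγ.2.1, hγ'.2.2 p.1 p.2 y hγ'.2.1⟩
    have := Set.Finite.of_injOn hmaps (fun y _ y' _ h => congrArg Prod.snd h) hfin
    exact Set.infinite_univ this
  refine (Finset.sum_le_sum hp).trans ?_
  rw [Finset.sum_add_distrib, Finset.sum_add_distrib]
  refine Nat.add_le_add (Nat.add_le_add ?_ ?_) (hX2.trans (Nat.add_le_add_right hcι _))
  · simp
  · simp only [Finset.card_filter]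
    rw [Finset.sum_comm]
    refine (Finset.sum_le_card_nsmul _ _ ((d + 2 * d * d) * d) (fun γ _ => ?_)).trans ?_
    · rw [← Finset.card_filter]
      refine le_trans (Finset.card_le_card ?_) (hEx γ)
      intro p hp
      exact (Finset.mem_filter.1 hp).2
    · rw [smul_eq_mul, Finset.card_univ]
      exact Nat.mul_le_mul_right _ hι0

lemma cube_root (X K N G : ℕ) (h : X ^ 3 ≤ K * (G ^ 2 * N ^ 2)) :
    (X : ℝ) ≤ K * ((N : ℝ) ^ (2/3 : ℝ) * (G : ℝ) ^ (2/3 : ℝ)) := by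
  have hN : ((N : ℝ) ^ (2/3 : ℝ)) ^ 3 = (N : ℝ) ^ 2 := by
    rw [← Real.rpow_natCast, ← Real.rpow_mul (Nat.cast_nonneg _), ← Real.rpow_natCast]
    norm_num
  have hG : ((G : ℝ) ^ (2/3 : ℝ)) ^ 3 = (G : ℝ) ^ 2 := by
    rw [← Real.rpow_natCast, ← Real.rpow_mul (Nat.cast_nonneg _), ← Real.rpow_natCast]
    norm_num
  have hK : K ≤ K ^ 3 := Nat.le_self_pow (by norm_num) K
  have h' : (X : ℝ) ^ 3 ≤ K ^ 3 * (G ^ 2 * N ^ 2) := by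
    have : X ^ 3 ≤ K ^ 3 * (G ^ 2 * N ^ 2) := h.trans (Nat.mul_le_mul_right _ hK)
    exact_mod_cast this
  refine le_of_pow_le_pow_left₀ (n := 3) (by norm_num) (by positivity) ?_
  rw [mul_pow, mul_pow, hN, hG]
  linarith

lemma final_arith (d M : ℕ) : ∃ C : ℝ, 0 < C ∧ ∀ I N G X : ℕ,
    (X ≤ 6 * N ∨ X ^ 3 ≤ 288 * ((G * ((d + 2 * d * d + 1) * d)) ^ 2 * M) * N ^ 2) →
    I ≤ N + G * ((d + 2 * d * d) * d) + (G * ((d + 2 * d * d + 1) * d) + M * X) →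
    (I : ℝ) ≤ C * ((N : ℝ) ^ (2/3 : ℝ) * (G : ℝ) ^ (2/3 : ℝ) + (N : ℝ) + (G : ℝ)) := by
  set b := (d + 2 * d * d) * d with hb
  set a := (d + 2 * d * d + 1) * d with ha
  set K := 288 * (a ^ 2 * M) with hK
  refine ⟨1 + b + a + M * (6 + K), by positivity, ?_⟩
  intro I N G X hX hI
  set T : ℝ := (N : ℝ) ^ (2/3 : ℝ) * (G : ℝ) ^ (2/3 : ℝ) with hT
  have hT0 : 0 ≤ T := by positivity
  have hX' : (X : ℝ) ≤ 6 * N + K * T := by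
    rcases hX with h | h
    · have : (X : ℝ) ≤ 6 * N := by exact_mod_cast h
      have : 0 ≤ (K : ℝ) * T := by positivity
      linarith
    · have := cube_root X K N G (h.trans (le_of_eq (by rw [hK]; ring)))
      have h0 : (0 : ℝ) ≤ N := Nat.cast_nonneg _
      linarith
  have hI' : (I : ℝ) ≤ N + G * b + (G * a + M * X) := by exact_mod_cast hI
  have hMX : (M : ℝ) * X ≤ M * (6 * N + K * T) := by gcongr
  have e : (1 + b + a + M * (6 + K)) * (T + N + G) - (N + G * b + (G * a + M * (6 * N + K * T)))
      = (1 + b + a + 6 * M) * T + (b + a + M * K) * N + (1 + M * (6 + K)) * (G : ℝ) := by ring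
  have e2 : 0 ≤ (1 + b + a + 6 * M) * T + (b + a + M * K) * N + (1 + M * (6 + K)) * (G : ℝ) := by
    positivity
  linarith

end IncB

open scoped Classical

/-- Szemerédi–Trotter type incidence bound for points and bounded-degree irreducible
algebraic curves with bounded multiple intersections (CEGSW / Pach–Sharir). -/
theorem incidence_bound_curves (d M : ℕ) (hd : 1 ≤ d) (hM : 1 ≤ M) :
    ∃ C : ℝ, 0 < C ∧
      ∀ (P : Finset (ℝ × ℝ)) (Γ : Finset (Set (ℝ × ℝ))),
        (∀ γ ∈ Γ, ∃ f : MvPolynomial (Fin 2) ℝ, Irreducible f ∧ f.totalDegree ≤ d ∧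
          γ = {p : ℝ × ℝ | MvPolynomial.eval ![p.1, p.2] f = 0}) →
        (∀ γ ∈ Γ, ∀ γ' ∈ Γ, γ ≠ γ' → (γ ∩ γ').Finite ∧ (γ ∩ γ').ncard ≤ M) →
        (∀ p ∈ P, ∀ q ∈ P, p ≠ q → (Γ.filter (fun γ => p ∈ γ ∧ q ∈ γ)).card ≤ M) →
        ((∑ p ∈ P, (Γ.filter (fun γ => p ∈ γ)).card : ℕ) : ℝ) ≤
          C * ((P.card : ℝ) ^ (2/3 : ℝ) * (Γ.card : ℝ) ^ (2/3 : ℝ)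
            + (P.card : ℝ) + (Γ.card : ℝ)) := by
  obtain ⟨C, hC, h⟩ := IncB.final_arith d M
  refine ⟨C, hC, ?_⟩
  intro P Γ h1 h2 h3
  obtain ⟨X, hX1, hX2⟩ := IncB.count d M P Γ h1 h2 h3
  exact h _ _ _ X hX1 hX2
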